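/- arXiv:2004.12496 — 9 statements merged into one kernel-verified Lean document; each statement's English description precedes it below -/
import Mathlib

section
/- There is a universal constant c > 0 such that the following holds. Let n ∈ ℕ₊, let p be a distribution on {−1,1}^n, let ε ∈ (0, 1/4], and let J ⊆ [n] be a set of variables such that p is ε-far from being a junta distribution over J. Then, with σ = 1/2, Σ_{j=1}^{⌈log₂(2n)⌉} E_{ρ∼D_{[n]∖J}(p)} [ E_{ν∼D_{σ^j}(p|ρ)} [ ‖μ((p|ρ)|ν)‖₂ ] ] ≥ ε / (log₂(n/ε))^c. -/
/-!
The proof gives the stronger bound `ε ≤ 5 · Σ_j E ‖μ‖₂`, and `log₂(n/ε) ≥ 2` turns the factor `5`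
into a power `c = 3` of the logarithm.

Let `avg S p` be the uniform average of `p` over the coordinates in `S` and `U = Jᶜ`.  Since
`avg U p` is a junta distribution over `J`, the hypothesis gives `2ε ≤ ‖p - avg U p‖₁`.  For a set
`S` of free coordinates put `h_{S,i} = avg S (p · xᵢ)`, `N_S = (Σ_{i ∈ S} h_{S,i}²)^{1/2}` and
`R(S) = Σ_x N_S(x)`.  The normalisation by the mass of the subcube cancels against the probability
of that subcube, so `R(S)` is the expected norm of the mean vector over restrictions with free set
`S`, and the right-hand side of the theorem is `Σ_j E R(S)` with `S ∼ S_{2^{-j}}(U)`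
(`sum_EDσCond`).

Thinning `U` repeatedly by random halving telescopes `p - avg U p` (`halving_telescope`), and two
estimates remain.

* One halving (`halving_step`): for `S` a random half of `U`,
  `E ‖avg S p - avg U p‖₁ ≤ 2π E R(S)`.  By `oriented_pisier` the left side is at most
  `π E Σ_x (Σ_i a_i²)^{1/2}`, where `a_i = |h_{S ∪ {i},i}(x)|` is the half-difference of `avg S p`
  along an edge, and each edge is counted only at one end, which may be chosen freely; the
  choice made is the end where `N_S` is larger.  As `h_{S ∪ {i},·}` is the average of `h_{S,·}`
  over the two ends, this forces `N_{S ∪ {i}} ≤ a_i + N_S`.  Setting `W_i = a_i² / N_{S ∪ {i}}`, this gives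
  `a_i² ≤ 2 W_i N_S + W_i²`, hence `(Σ a_i²)^{1/2} ≤ N_S + Σ W_i`.  Exchanging the pair `(S, i)`,
  `i ∉ S`, with `(T, i)`, `T = S ∪ {i}`, the expectation of `Σ W_i` is
  `E Σ_{i ∈ T} h_{T,i}² / N_T = E N_T`.

* The last scale (`last_scale`): when `σ |U| ≤ 1/2`, the union bound
  `‖p - avg S p‖₁ ≤ Σ_{i ∈ S} R({i})` together with the event `|S| = 1` gives
  `E ‖p - avg S p‖₁ ≤ 2 E R(S)`.

The inequality `oriented_pisier` is obtained by differentiating the correlation of `f` with the sign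
of `f - avg U f` along the noise semigroup: symmetry across an edge permits the orientation, the
derivative at correlation `r` is at most `2 (1 - r²)^{-1/2}` times the oriented gradient by
Cauchy–Schwarz, and this integrates to `π` over `[0, 1]`.
-/

open Finset

namespace JuntaPaper

/-- The Boolean cube `{-1,1}^n`, encoded with `true ↦ 1` and `false ↦ -1`. -/
abbrev Cube (n : ℕ) := Fin n → Bool

/-- The real value of a bit. -/
noncomputable def bval (b : Bool) : ℝ := if b then 1 else -1

/-- `p` is a probability distribution on the cube. -/
def IsDist {n : ℕ} (p : Cube n → ℝ) : Prop :=
  (∀ x, 0 ≤ p x) ∧ ∑ x, p x = 1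

/-- Total variation distance between two distributions on a finite set. -/
noncomputable def dtv {α : Type*} [Fintype α] (p q : α → ℝ) : ℝ :=
  (1 / 2) * ∑ x, |p x - q x|

/-- The uniform distribution on the cube. -/
noncomputable def uniform (n : ℕ) : Cube n → ℝ := fun _ => (2 : ℝ)⁻¹ ^ n

/-- `p` is a junta distribution over the coordinates in `J`. -/
def JuntaOn {n : ℕ} (J : Finset (Fin n)) (p : Cube n → ℝ) : Prop :=
  ∀ x y : Cube n, (∀ i ∈ J, x i = y i) → p x = p y

/-- The mean vector of a distribution on the cube. -/
noncomputable def meanVec {n : ℕ} (p : Cube n → ℝ) (i : Fin n) : ℝ :=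
  ∑ x, p x * bval (x i)

/-- A restriction: `none` means `*` (free), `some b` fixes the coordinate to `b`. -/
abbrev Restr (n : ℕ) := Fin n → Option Bool

/-- `x` agrees with the restriction `ρ` on all fixed coordinates. -/
def agrees {n : ℕ} (ρ : Restr n) (x : Cube n) : Prop :=
  ∀ i : Fin n, ∀ b : Bool, ρ i = some b → x i = b

instance {n : ℕ} (ρ : Restr n) (x : Cube n) : Decidable (agrees ρ x) :=
  inferInstanceAs (Decidable (∀ i : Fin n, ∀ b : Bool, ρ i = some b → x i = b))

/-- The set of free (star) coordinates of a restriction. -/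
def starsOf {n : ℕ} (ρ : Restr n) : Finset (Fin n) :=
  Finset.univ.filter (fun i => ρ i = none)

/-- The probability mass of the subcube described by `ρ`. -/
noncomputable def mass {n : ℕ} (p : Cube n → ℝ) (ρ : Restr n) : ℝ :=
  ∑ x, if agrees ρ x then p x else 0

/-- The conditional probability of `x` given the subcube `ρ` (this is the restricted
distribution `p|ρ`, viewed on completions of `ρ`). -/
noncomputable def condProb {n : ℕ} (p : Cube n → ℝ) (ρ : Restr n) (x : Cube n) : ℝ :=
  (if agrees ρ x then p x else 0) / mass p ρ

/-- The `i`-th coordinate of the mean vector of the restricted distribution `p|ρ`. -/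
noncomputable def condMean {n : ℕ} (p : Cube n → ℝ) (ρ : Restr n) (i : Fin n) : ℝ :=
  ∑ x, condProb p ρ x * bval (x i)

/-- The Euclidean norm `‖μ(p|ρ)‖₂` of the mean vector of the restricted
distribution `p|ρ` (over its free coordinates). -/
noncomputable def restNorm {n : ℕ} (p : Cube n → ℝ) (ρ : Restr n) : ℝ :=
  Real.sqrt (∑ i, (if ρ i = none then condMean p ρ i else 0) ^ 2)

/-- The restriction with stars exactly on `S` and fixed to `x` elsewhere. -/
def restrictOn {n : ℕ} (S : Finset (Fin n)) (x : Cube n) : Restr n :=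
  fun i => if i ∈ S then none else some (x i)

/-- Probability that `S_σ(T)` produces `S ⊆ T`. -/
noncomputable def subsetProb {n : ℕ} (σ : ℝ) (T S : Finset (Fin n)) : ℝ :=
  σ ^ S.card * (1 - σ) ^ (T.card - S.card)

/-- Expectation of `F(ν)` for `ν ∼ D_σ(p|ρ)`: draw `x ∼ p` conditioned on agreeing with
`ρ`, draw `S ⊆ stars(ρ)` including each element independently with probability `σ`, and
evaluate `F` on the combined restriction (stars exactly on `S`). -/
noncomputable def EDσCond {n : ℕ} (p : Cube n → ℝ) (ρ : Restr n) (σ : ℝ)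
    (F : Restr n → ℝ) : ℝ :=
  ∑ x, condProb p ρ x *
    ∑ S ∈ (starsOf ρ).powerset, subsetProb σ (starsOf ρ) S * F (restrictOn S x)

/-- The all-stars restriction (so `p|allStars n = p`). -/
def allStars (n : ℕ) : Restr n := fun _ => none

/-! ### Averaging over a set of coordinates -/

/-- The point `x` with its `i`-th bit negated. -/
def flipBit {n : ℕ} (i : Fin n) (x : Cube n) : Cube n := Function.update x i (!x i)

lemma flipBit_same {n : ℕ} (i : Fin n) (x : Cube n) : flipBit i x i = !x i := by
  simp [flipBit]

lemma flipBit_ne {n : ℕ} {i j : Fin n} (h : j ≠ i) (x : Cube n) : flipBit i x j = x j := by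
  simp [flipBit, h]

lemma flipBit_flipBit {n : ℕ} (i : Fin n) (x : Cube n) : flipBit i (flipBit i x) = x := by
  funext j
  by_cases h : j = i
  · subst h; simp [flipBit_same]
  · simp [flipBit_ne h]

lemma flipBit_comm {n : ℕ} (i j : Fin n) (x : Cube n) :
    flipBit i (flipBit j x) = flipBit j (flipBit i x) := by
  by_cases hij : i = j
  · subst hij; rfl
  funext k
  by_cases hi : k = i
  · subst hi; simp [flipBit_same, flipBit_ne hij]
  · by_cases hj : k = j
    · subst hj; simp [flipBit_same, flipBit_ne hi]
    · simp [flipBit_ne hi, flipBit_ne hj]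

lemma sum_flipBit {n : ℕ} (i : Fin n) (F : Cube n → ℝ) : ∑ x, F (flipBit i x) = ∑ x, F x :=
  Equiv.sum_comp (Function.Involutive.toPerm (flipBit i) (flipBit_flipBit i)) F

lemma bval_not (b : Bool) : bval (!b) = -bval b := by cases b <;> simp [bval]

lemma bval_mul_self (b : Bool) : bval b * bval b = 1 := by cases b <;> simp [bval]

lemma abs_bval (b : Bool) : |bval b| = 1 := by cases b <;> simp [bval]

lemma agrees_restrictOn {n : ℕ} {S : Finset (Fin n)} {x y : Cube n} :
    agrees (restrictOn S x) y ↔ ∀ i, i ∉ S → y i = x i := by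
  unfold agrees restrictOn
  constructor
  · intro h i hi
    exact h i (x i) (by simp [hi])
  · intro h i b hb
    by_cases hi : i ∈ S
    · simp [hi] at hb
    · simp only [hi, if_false, Option.some.injEq] at hb
      rw [h i hi, hb]

/-- The average of `f` over the coordinates in `S`, the others being fixed as in `x`: the
conditional expectation of `f`, for the uniform measure, given the coordinates outside `S`. -/
noncomputable def avg {n : ℕ} (S : Finset (Fin n)) (f : Cube n → ℝ) (x : Cube n) : ℝ :=
  (2 : ℝ)⁻¹ ^ S.card * ∑ y, if agrees (restrictOn S x) y then f y else 0

lemma avg_empty {n : ℕ} (f : Cube n → ℝ) (x : Cube n) : avg ∅ f x = f x := by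
  unfold avg
  have : ∀ y, agrees (restrictOn ∅ x) y ↔ y = x := by
    intro y
    rw [agrees_restrictOn]
    simp [funext_iff]
  simp [this]

lemma avg_insert {n : ℕ} {S : Finset (Fin n)} {i : Fin n} (hi : i ∉ S) (f : Cube n → ℝ)
    (x : Cube n) : avg (insert i S) f x = (avg S f x + avg S f (flipBit i x)) / 2 := by
  unfold avg
  rw [Finset.card_insert_of_notMem hi, ← mul_add, ← Finset.sum_add_distrib, pow_succ,
    mul_assoc, mul_div_assoc]
  congr 1
  rw [inv_mul_eq_div]
  congr 1
  refine Finset.sum_congr rfl fun y _ => ?_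
  by_cases hxy : y i = x i
  · have h2 : ¬ agrees (restrictOn S (flipBit i x)) y := by
      rw [agrees_restrictOn]
      intro h
      have := h i hi
      rw [flipBit_same, hxy] at this
      simp at this
    have h1 : agrees (restrictOn (insert i S) x) y ↔ agrees (restrictOn S x) y := by
      rw [agrees_restrictOn, agrees_restrictOn]
      constructor
      · intro h j hj
        by_cases hji : j = i
        · subst hji; exact hxy
        · exact h j (by simp [hji, hj])
      · intro h j hj
        exact h j (fun h' => hj (Finset.mem_insert_of_mem h'))
    simp [h1, h2]
  · have h2 : ¬ agrees (restrictOn S x) y := by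
      rw [agrees_restrictOn]
      exact fun h => hxy (h i hi)
    have h1 : agrees (restrictOn (insert i S) x) y ↔ agrees (restrictOn S (flipBit i x)) y := by
      rw [agrees_restrictOn, agrees_restrictOn]
      constructor
      · intro h j hj
        by_cases hji : j = i
        · subst hji
          rw [flipBit_same]
          revert hxy
          cases y j <;> cases x j <;> simp
        · rw [flipBit_ne hji]
          exact h j (by simp [hji, hj])
      · intro h j hj
        have hji : j ≠ i := fun h' => hj (h' ▸ Finset.mem_insert_self _ _)
        rw [h j (fun h' => hj (Finset.mem_insert_of_mem h')), flipBit_ne hji]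
    simp [h1, h2]

lemma avg_flipBit {n : ℕ} (S : Finset (Fin n)) (f : Cube n → ℝ) (i : Fin n) (x : Cube n) :
    avg S (fun z => f (flipBit i z)) x = avg S f (flipBit i x) := by
  induction S using Finset.induction_on generalizing x with
  | empty => simp [avg_empty]
  | insert j S hj ih => rw [avg_insert hj, avg_insert hj, ih, ih, flipBit_comm i j]

lemma avg_invariant {n : ℕ} {S : Finset (Fin n)} {i : Fin n} (hi : i ∈ S) (f : Cube n → ℝ)
    (x : Cube n) : avg S f (flipBit i x) = avg S f x := by
  rw [← Finset.insert_erase hi, avg_insert (Finset.notMem_erase i S),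
    avg_insert (Finset.notMem_erase i S), flipBit_flipBit, add_comm]

lemma avg_bval_mul {n : ℕ} {S : Finset (Fin n)} {i : Fin n} (hi : i ∉ S) (f : Cube n → ℝ)
    (x : Cube n) : avg S (fun z => f z * bval (z i)) x = avg S f x * bval (x i) := by
  unfold avg
  rw [mul_assoc, Finset.sum_mul]
  congr 1
  refine Finset.sum_congr rfl fun y _ => ?_
  split_ifs with h
  · simp only [agrees_restrictOn.1 h i hi]
  · simp

lemma avg_half_add {n : ℕ} (S : Finset (Fin n)) (f g : Cube n → ℝ) (x : Cube n) :
    avg S (fun z => (f z + g z) / 2) x = (avg S f x + avg S g x) / 2 := by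
  unfold avg
  rw [← mul_add, mul_div_assoc, ← Finset.sum_add_distrib, Finset.sum_div]
  congr 1
  refine Finset.sum_congr rfl fun y _ => ?_
  split_ifs <;> simp

/-- The tower property. -/
lemma avg_avg {n : ℕ} {S U : Finset (Fin n)} (h : S ⊆ U) (f : Cube n → ℝ) (x : Cube n) :
    avg U (avg S f) x = avg U f x := by
  induction S using Finset.induction_on with
  | empty =>
    have : avg ∅ f = f := funext fun z => avg_empty f z
    rw [this]
  | insert i S hi ih =>
    have hS : S ⊆ U := fun j hj => h (Finset.mem_insert_of_mem hj)
    have hiU : i ∈ U := h (Finset.mem_insert_self _ _)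
    have e : avg (insert i S) f = fun z => (avg S f z + (fun w => avg S f (flipBit i w)) z) / 2 :=
      funext fun z => avg_insert hi f z
    rw [e, avg_half_add, avg_flipBit, avg_invariant hiU, ih hS]
    ring

lemma avg_one {n : ℕ} (S : Finset (Fin n)) (x : Cube n) : avg S (fun _ => 1) x = 1 := by
  induction S using Finset.induction_on generalizing x with
  | empty => simp [avg_empty]
  | insert j S hj ih => rw [avg_insert hj, ih, ih]; norm_num

lemma avg_nonneg {n : ℕ} (S : Finset (Fin n)) {f : Cube n → ℝ} (hf : ∀ x, 0 ≤ f x)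
    (x : Cube n) : 0 ≤ avg S f x := by
  unfold avg
  refine mul_nonneg (by positivity) (Finset.sum_nonneg fun y _ => ?_)
  split_ifs
  · exact hf y
  · exact le_rfl

lemma sum_avg {n : ℕ} (S : Finset (Fin n)) (f : Cube n → ℝ) : ∑ x, avg S f x = ∑ x, f x := by
  induction S using Finset.induction_on with
  | empty => simp [avg_empty]
  | insert j S hj ih =>
    simp_rw [avg_insert hj]
    rw [← Finset.sum_div, Finset.sum_add_distrib, sum_flipBit j (avg S f), ih]
    ring

lemma agrees_symm {n : ℕ} {S : Finset (Fin n)} {x y : Cube n}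
    (h : agrees (restrictOn S x) y) : agrees (restrictOn S y) x := by
  rw [agrees_restrictOn] at *
  exact fun i hi => (h i hi).symm

lemma restrictOn_congr {n : ℕ} {S : Finset (Fin n)} {x y : Cube n}
    (h : agrees (restrictOn S x) y) : restrictOn S y = restrictOn S x := by
  rw [agrees_restrictOn] at h
  funext i
  unfold restrictOn
  split_ifs with hi
  · rfl
  · rw [h i hi]

lemma sum_mul_avg {n : ℕ} (S : Finset (Fin n)) (f g : Cube n → ℝ) :
    ∑ x, g x * avg S f x = ∑ x, avg S g x * f x := by
  unfold avg
  simp_rw [Finset.mul_sum, Finset.sum_mul]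
  rw [Finset.sum_comm]
  refine Finset.sum_congr rfl fun y _ => Finset.sum_congr rfl fun x _ => ?_
  have : agrees (restrictOn S x) y ↔ agrees (restrictOn S y) x := ⟨agrees_symm, agrees_symm⟩
  simp only [this]
  split_ifs <;> ring

/-! ### An oriented Pisier-type inequality -/

/-- The half-difference `(f(x) - f(xⁱ))/2` along direction `i`. -/
noncomputable def lap {n : ℕ} (i : Fin n) (f : Cube n → ℝ) (x : Cube n) : ℝ :=
  (f x - f (flipBit i x)) / 2

lemma lap_flipBit {n : ℕ} (i : Fin n) (f : Cube n → ℝ) (x : Cube n) :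
    lap i f (flipBit i x) = -lap i f x := by
  unfold lap; rw [flipBit_flipBit]; ring

/-- One factor of the noise kernel: noise of correlation `r` on the coordinates of `U` and
no noise on the others. -/
noncomputable def kfac {n : ℕ} (U : Finset (Fin n)) (r : ℝ) (x y : Cube n) (i : Fin n) : ℝ :=
  (1 + (if i ∈ U then r else 1) * (bval (x i) * bval (y i))) / 2

/-- The noise kernel: `y` is obtained from `x` by independent noise of correlation `r` on the
coordinates of `U`. -/
noncomputable def kern {n : ℕ} (U : Finset (Fin n)) (r : ℝ) (x y : Cube n) : ℝ :=
  ∏ i, kfac U r x y i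

/-- The noise kernel with the factor of coordinate `i` left out. -/
noncomputable def kernErase {n : ℕ} (U : Finset (Fin n)) (r : ℝ) (i : Fin n) (x y : Cube n) : ℝ :=
  ∏ j ∈ univ.erase i, kfac U r x y j

lemma kern_eq {n : ℕ} (U : Finset (Fin n)) (r : ℝ) (i : Fin n) (x y : Cube n) :
    kern U r x y = kfac U r x y i * kernErase U r i x y :=
  (Finset.mul_prod_erase univ _ (Finset.mem_univ i)).symm

lemma kernErase_flip_left {n : ℕ} (U : Finset (Fin n)) (r : ℝ) (i : Fin n) (x y : Cube n) :
    kernErase U r i (flipBit i x) y = kernErase U r i x y := by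
  refine Finset.prod_congr rfl fun j hj => ?_
  unfold kfac
  rw [flipBit_ne (Finset.ne_of_mem_erase hj)]

lemma kernErase_flip_right {n : ℕ} (U : Finset (Fin n)) (r : ℝ) (i : Fin n) (x y : Cube n) :
    kernErase U r i x (flipBit i y) = kernErase U r i x y := by
  refine Finset.prod_congr rfl fun j hj => ?_
  unfold kfac
  rw [flipBit_ne (Finset.ne_of_mem_erase hj)]

lemma bval_mul_bval_cases (a b : Bool) : bval a * bval b = 1 ∨ bval a * bval b = -1 := by
  cases a <;> cases b <;> simp [bval]

lemma kern_nonneg {n : ℕ} (U : Finset (Fin n)) {r : ℝ} (h0 : 0 ≤ r) (h1 : r ≤ 1) (x y : Cube n) :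
    0 ≤ kern U r x y := by
  refine Finset.prod_nonneg fun i _ => ?_
  unfold kfac
  rcases bval_mul_bval_cases (x i) (y i) with h | h <;> rw [h] <;> split_ifs <;> linarith

lemma sum_kern {n : ℕ} (U : Finset (Fin n)) (r : ℝ) (x : Cube n) : ∑ y, kern U r x y = 1 := by
  have h := (Finset.prod_univ_sum (fun _ : Fin n => (univ : Finset Bool))
    (fun i b => (1 + (if i ∈ U then r else 1) * (bval (x i) * bval b)) / 2)).symm
  rw [Fintype.piFinset_univ] at h
  unfold kern kfac
  rw [h]
  refine Finset.prod_eq_one fun i _ => ?_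
  simp [bval]
  ring

/-- Under the noise kernel the variable `xᵢyᵢ - r` is centred given the other coordinates. -/
lemma sum_kern_centred {n : ℕ} {U : Finset (Fin n)} (r : ℝ) (x : Cube n) {i : Fin n} (hi : i ∈ U)
    (H : Cube n → ℝ) (hH : ∀ y, H (flipBit i y) = H y) :
    ∑ y, kern U r x y * ((bval (x i) * bval (y i) - r) * H y) = 0 := by
  have h := sum_flipBit i (fun y => kern U r x y * ((bval (x i) * bval (y i) - r) * H y))
  have h2 : ∑ y, (kern U r x (flipBit i y) * ((bval (x i) * bval (flipBit i y i) - r) *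
      H (flipBit i y)) + kern U r x y * ((bval (x i) * bval (y i) - r) * H y)) = 0 := by
    refine Finset.sum_eq_zero fun y _ => ?_
    rw [kern_eq U r i, kern_eq U r i x y, kernErase_flip_right, hH]
    unfold kfac
    rw [flipBit_same, bval_not]
    simp only [hi, if_true]
    have hu : (bval (x i) * bval (y i)) * (bval (x i) * bval (y i)) = 1 := by
      rcases bval_mul_bval_cases (x i) (y i) with h | h <;> rw [h] <;> norm_num
    linear_combination (r * kernErase U r i x y * H y) * hu
  rw [Finset.sum_add_distrib, h] at h2
  linarith

lemma sum_kern_sq {n : ℕ} (U : Finset (Fin n)) (r : ℝ) (x : Cube n) (v : Fin n → ℝ) :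
    ∑ y, kern U r x y * (∑ i ∈ U, v i * (bval (x i) * bval (y i) - r)) ^ 2
      = (1 - r ^ 2) * ∑ i ∈ U, v i ^ 2 := by
  have h1 : ∀ i ∈ U, ∀ j ∈ U, ∑ y, kern U r x y * ((v i * (bval (x i) * bval (y i) - r)) *
      (v j * (bval (x j) * bval (y j) - r))) = if i = j then (1 - r ^ 2) * v i ^ 2 else 0 := by
    intro i hi j hj
    split_ifs with hij
    · subst hij
      have e : ∀ y : Cube n, kern U r x y * ((v i * (bval (x i) * bval (y i) - r)) *
          (v i * (bval (x i) * bval (y i) - r))) = (1 - r ^ 2) * v i ^ 2 * kern U r x y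
          + kern U r x y * ((bval (x i) * bval (y i) - r) * (-2 * r * v i ^ 2)) := by
        intro y
        have hu : (bval (x i) * bval (y i)) * (bval (x i) * bval (y i)) = 1 := by
          rcases bval_mul_bval_cases (x i) (y i) with h | h <;> rw [h] <;> norm_num
        linear_combination (kern U r x y * v i ^ 2) * hu
      simp_rw [e]
      rw [Finset.sum_add_distrib, ← Finset.mul_sum, sum_kern,
        sum_kern_centred r x hi (fun _ => -2 * r * v i ^ 2) (fun _ => rfl)]
      ring
    · rw [← sum_kern_centred r x hi (fun y => v i * (v j * (bval (x j) * bval (y j) - r)))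
        (fun y => by rw [flipBit_ne (Ne.symm hij)])]
      exact Finset.sum_congr rfl fun y _ => by ring
  simp_rw [sq, Finset.sum_mul_sum, Finset.mul_sum]
  rw [Finset.sum_comm]
  refine Finset.sum_congr rfl fun i hi => ?_
  rw [Finset.sum_comm]
  rw [Finset.sum_congr rfl (h1 i hi)]
  simp [hi, sq]

/-- Cauchy–Schwarz against the noise kernel. -/
lemma sum_kern_abs_le {n : ℕ} (U : Finset (Fin n)) {r : ℝ} (h0 : 0 ≤ r) (h1 : r ≤ 1) (x : Cube n)
    (v : Fin n → ℝ) :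
    ∑ y, kern U r x y * |∑ i ∈ U, v i * (bval (x i) * bval (y i) - r)|
      ≤ √(1 - r ^ 2) * √(∑ i ∈ U, v i ^ 2) := by
  rw [← Real.sqrt_mul (by nlinarith), ← sum_kern_sq U r x v]
  refine Real.le_sqrt_of_sq_le ?_
  have := Finset.sum_mul_sq_le_sq_mul_sq univ (fun y => √(kern U r x y))
    (fun y => √(kern U r x y) * |∑ i ∈ U, v i * (bval (x i) * bval (y i) - r)|)
  have e1 : ∀ y, √(kern U r x y) * √(kern U r x y) = kern U r x y := fun y =>
    Real.mul_self_sqrt (kern_nonneg U h0 h1 x y)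
  have e2 : ∀ y, √(kern U r x y) ^ 2 = kern U r x y := fun y =>
    Real.sq_sqrt (kern_nonneg U h0 h1 x y)
  simpa only [← mul_assoc, e1, mul_pow, e2, sq_abs, sum_kern, one_mul] using this

lemma kern_one {n : ℕ} (U : Finset (Fin n)) (x y : Cube n) :
    kern U 1 x y = if x = y then 1 else 0 := by
  unfold kern kfac
  split_ifs with h
  · subst h
    refine Finset.prod_eq_one fun i _ => ?_
    rw [bval_mul_self]; simp
  · obtain ⟨i, hi⟩ := Function.ne_iff.1 h
    refine Finset.prod_eq_zero (Finset.mem_univ i) ?_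
    have : bval (x i) * bval (y i) = -1 := by
      revert hi
      cases x i <;> cases y i <;> simp [bval]
    rw [this]; simp

lemma kern_zero {n : ℕ} (U : Finset (Fin n)) (x y : Cube n) :
    kern U 0 x y = (2 : ℝ)⁻¹ ^ U.card * if agrees (restrictOn U y) x then 1 else 0 := by
  unfold kern
  rw [← Finset.prod_mul_prod_compl U]
  congr 1
  · rw [Finset.prod_congr rfl (g := fun _ => (2 : ℝ)⁻¹), Finset.prod_const]
    intro i hi
    unfold kfac
    simp [hi]
  · split_ifs with h
    · refine Finset.prod_eq_one fun i hi => ?_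
      rw [Finset.mem_compl] at hi
      unfold kfac
      rw [agrees_restrictOn.1 h i hi, bval_mul_self]
      simp [hi]
    · rw [agrees_restrictOn] at h
      push Not at h
      obtain ⟨i, hi, hne⟩ := h
      refine Finset.prod_eq_zero (Finset.mem_compl.2 hi) ?_
      have : bval (x i) * bval (y i) = -1 := by
        revert hne
        cases x i <;> cases y i <;> simp [bval]
      unfold kfac
      rw [this]; simp [hi]

/-- The correlation of `g` with the `r`-noised version of `f`. -/
noncomputable def noiseCorr {n : ℕ} (U : Finset (Fin n)) (f g : Cube n → ℝ) (r : ℝ) : ℝ :=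
  ∑ x, ∑ y, f x * g y * kern U r x y

lemma noiseCorr_one {n : ℕ} (U : Finset (Fin n)) (f g : Cube n → ℝ) :
    noiseCorr U f g 1 = ∑ x, f x * g x := by
  unfold noiseCorr
  simp [kern_one]

lemma noiseCorr_zero {n : ℕ} (U : Finset (Fin n)) (f g : Cube n → ℝ) :
    noiseCorr U f g 0 = ∑ y, avg U f y * g y := by
  unfold noiseCorr avg
  rw [Finset.sum_comm]
  refine Finset.sum_congr rfl fun y _ => ?_
  rw [mul_assoc, Finset.sum_mul, Finset.mul_sum]
  refine Finset.sum_congr rfl fun x _ => ?_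
  rw [kern_zero]
  split_ifs <;> ring

lemma hasDerivAt_kern {n : ℕ} (U : Finset (Fin n)) (x y : Cube n) (r : ℝ) :
    HasDerivAt (fun r => kern U r x y)
      (∑ i ∈ U, kernErase U r i x y * (bval (x i) * bval (y i) / 2)) r := by
  have h : ∀ i ∈ (univ : Finset (Fin n)), HasDerivAt (fun r => kfac U r x y i)
      (if i ∈ U then bval (x i) * bval (y i) / 2 else 0) r := by
    intro i _
    unfold kfac
    split_ifs
    · simpa using (((hasDerivAt_id r).mul_const (bval (x i) * bval (y i))).const_add 1).div_const 2
    · exact hasDerivAt_const _ _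
  refine (HasDerivAt.fun_finsetProd h).congr_deriv ?_
  simp only [smul_eq_mul, mul_ite, mul_zero, Finset.sum_ite_mem, Finset.univ_inter]
  rfl

/-- Orienting the cube edges: a sum over both ends of each edge can be redistributed over the ends
with any weights `w` summing to `1` on each edge. -/
lemma sum_orient {n : ℕ} (U : Finset (Fin n)) (r : ℝ) (i : Fin n) (f : Cube n → ℝ)
    (w : Cube n → ℝ) (hw : ∀ x, w x + w (flipBit i x) = 1) (y : Cube n) :
    ∑ x, f x * (kernErase U r i x y * bval (x i))
      = 2 * ∑ x, w x * lap i f x * (kernErase U r i x y * bval (x i)) := by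
  have h1 := sum_flipBit i (fun x => f x * (kernErase U r i x y * bval (x i)))
  have h2 := sum_flipBit i (fun x => w x * lap i f x * (kernErase U r i x y * bval (x i)))
  simp only [kernErase_flip_left, flipBit_same, bval_not, lap_flipBit] at h1 h2
  have h3 : ∑ x, (f x * (kernErase U r i x y * bval (x i))
      + f (flipBit i x) * (kernErase U r i x y * -bval (x i)))
      = 2 * ∑ x, (w x * lap i f x * (kernErase U r i x y * bval (x i))
        + w (flipBit i x) * -lap i f x * (kernErase U r i x y * -bval (x i))) := by
    rw [Finset.mul_sum]
    refine Finset.sum_congr rfl fun x _ => ?_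
    have := hw x
    have e : w (flipBit i x) = 1 - w x := by linarith
    rw [e]; unfold lap; ring
  rw [Finset.sum_add_distrib, Finset.sum_add_distrib, h1, h2] at h3
  linarith

/-- The derivative of the noise correlation, written with oriented half-differences and the
centred variables `xᵢyᵢ - r`. -/
lemma hasDerivAt_noiseCorr {n : ℕ} (U : Finset (Fin n)) (f g : Cube n → ℝ)
    (w : Fin n → Cube n → ℝ) (hw : ∀ i x, w i x + w i (flipBit i x) = 1)
    {r : ℝ} (hr : r ^ 2 < 1) :
    HasDerivAt (noiseCorr U f g)
      (∑ x, ∑ y, 2 / (1 - r ^ 2) * (g y * (kern U r x y *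
        ∑ i ∈ U, w i x * lap i f x * (bval (x i) * bval (y i) - r)))) r := by
  have h : HasDerivAt (noiseCorr U f g) (∑ x, ∑ y, f x * g y *
      ∑ i ∈ U, kernErase U r i x y * (bval (x i) * bval (y i) / 2)) r := by
    unfold noiseCorr
    exact HasDerivAt.fun_sum fun x _ => HasDerivAt.fun_sum fun y _ =>
      (hasDerivAt_kern U x y r).const_mul _
  convert h using 1
  rw [Finset.sum_comm, Finset.sum_comm (s := univ) (t := univ) (f := fun x y => f x * g y *
      ∑ i ∈ U, kernErase U r i x y * (bval (x i) * bval (y i) / 2))]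
  refine Finset.sum_congr rfl fun y _ => ?_
  have e1 : ∑ x, f x * g y * ∑ i ∈ U, kernErase U r i x y * (bval (x i) * bval (y i) / 2)
      = ∑ i ∈ U, g y * bval (y i) / 2 * ∑ x, f x * (kernErase U r i x y * bval (x i)) := by
    simp_rw [Finset.mul_sum]
    rw [Finset.sum_comm]
    exact Finset.sum_congr rfl fun i _ => Finset.sum_congr rfl fun x _ => by ring
  rw [e1]
  simp_rw [sum_orient U r _ f _ (hw _) y, Finset.mul_sum]
  rw [Finset.sum_comm]
  refine Finset.sum_congr rfl fun i hi => Finset.sum_congr rfl fun x _ => ?_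
  rw [kern_eq U r i]
  unfold kfac
  simp only [hi, if_true]
  have hu : (bval (x i) * bval (y i)) * (bval (x i) * bval (y i)) = 1 := by
    rcases bval_mul_bval_cases (x i) (y i) with h | h <;> rw [h] <;> norm_num
  have hne : (1 - r ^ 2 : ℝ) ≠ 0 := by linarith
  field_simp
  linear_combination (g y * kernErase U r i x y * w i x * lap i f x * r) * hu

/-- **Oriented Pisier inequality in `L¹`.**  Each edge of the cube in a direction `i ∈ U` is
distributed over its two ends with weights summing to `1`; the `L¹` distance of `f` to its average
over `U` is controlled by the gradient keeping only these weighted contributions. -/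
lemma oriented_pisier {n : ℕ} (U : Finset (Fin n)) (f : Cube n → ℝ)
    (w : Fin n → Cube n → ℝ) (hw : ∀ i x, w i x + w i (flipBit i x) = 1) :
    ∑ x, |f x - avg U f x| ≤ Real.pi * ∑ x, √(∑ i ∈ U, (w i x * lap i f x) ^ 2) := by
  set K := ∑ x, √(∑ i ∈ U, (w i x * lap i f x) ^ 2) with hK
  set g : Cube n → ℝ := fun x => if 0 ≤ f x - avg U f x then 1 else -1 with hg
  have hgabs : ∀ x, |g x| ≤ 1 := by
    intro x; simp only [hg]; split_ifs <;> simp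
  have e : ∑ x, |f x - avg U f x| = noiseCorr U f g 1 - noiseCorr U f g 0 := by
    rw [noiseCorr_one, noiseCorr_zero, ← Finset.sum_sub_distrib]
    refine Finset.sum_congr rfl fun x _ => ?_
    simp only [hg]
    split_ifs with h
    · rw [abs_of_nonneg h]; ring
    · rw [abs_of_neg (not_le.1 h)]; ring
  have hcont : Continuous (noiseCorr U f g) := by
    unfold noiseCorr kern kfac
    refine continuous_finsetSum _ fun x _ => continuous_finsetSum _ fun y _ =>
      continuous_const.mul (continuous_finsetProd _ fun i _ => ?_)
    split_ifs <;> fun_prop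
  -- The substitution `r = sin θ` makes the derivative bounded by `2K`.
  have hder : ∀ θ ∈ interior (Set.Icc (0 : ℝ) (Real.pi / 2)),
      ∃ d, HasDerivAt (fun θ => noiseCorr U f g (Real.sin θ)) d θ ∧ d ≤ 2 * K := by
    intro θ hθ
    rw [interior_Icc] at hθ
    have hcos : 0 < Real.cos θ :=
      Real.cos_pos_of_mem_Ioo ⟨by linarith [hθ.1, Real.pi_pos], hθ.2⟩
    have hsin0 : 0 ≤ Real.sin θ :=
      Real.sin_nonneg_of_nonneg_of_le_pi hθ.1.le (by linarith [hθ.2, Real.pi_pos])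
    have hsc := Real.sin_sq_add_cos_sq θ
    have hr : Real.sin θ ^ 2 < 1 := by nlinarith
    refine ⟨_, (hasDerivAt_noiseCorr U f g w hw hr).comp θ (Real.hasDerivAt_sin θ), ?_⟩
    have hc2 : 1 - Real.sin θ ^ 2 = Real.cos θ ^ 2 := by linarith
    have hb : ∀ x, ∑ y, 2 / (1 - Real.sin θ ^ 2) * (g y * (kern U (Real.sin θ) x y *
        ∑ i ∈ U, w i x * lap i f x * (bval (x i) * bval (y i) - Real.sin θ)))
        ≤ 2 / Real.cos θ * √(∑ i ∈ U, (w i x * lap i f x) ^ 2) := by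
      intro x
      have hs := sum_kern_abs_le U hsin0 (Real.sin_le_one θ) x (fun i => w i x * lap i f x)
      rw [hc2, Real.sqrt_sq hcos.le] at hs
      rw [hc2, ← Finset.mul_sum]
      calc 2 / Real.cos θ ^ 2 * ∑ y, g y * (kern U (Real.sin θ) x y *
            ∑ i ∈ U, w i x * lap i f x * (bval (x i) * bval (y i) - Real.sin θ))
          ≤ 2 / Real.cos θ ^ 2 * ∑ y, kern U (Real.sin θ) x y *
            |∑ i ∈ U, w i x * lap i f x * (bval (x i) * bval (y i) - Real.sin θ)| := by
            refine mul_le_mul_of_nonneg_left (Finset.sum_le_sum fun y _ => ?_) (by positivity)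
            have hk := kern_nonneg U hsin0 (Real.sin_le_one θ) x y
            refine (le_abs_self _).trans ?_
            rw [abs_mul, abs_mul, abs_of_nonneg hk]
            exact mul_le_of_le_one_left (by positivity) (hgabs y)
        _ ≤ 2 / Real.cos θ ^ 2 * (Real.cos θ * √(∑ i ∈ U, (w i x * lap i f x) ^ 2)) := by gcongr
        _ = _ := by field_simp
    calc _ ≤ (∑ x, 2 / Real.cos θ * √(∑ i ∈ U, (w i x * lap i f x) ^ 2)) * Real.cos θ := by
          gcongr with x
          exact hb x
      _ = 2 * K := by
          rw [← Finset.mul_sum, ← hK]; field_simp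
  have key := (convex_Icc (0 : ℝ) (Real.pi / 2)).image_sub_le_mul_sub_of_deriv_le
    (f := fun θ => noiseCorr U f g (Real.sin θ))
    (hcont.comp Real.continuous_sin).continuousOn
    (fun θ hθ => by
      obtain ⟨d, hd, _⟩ := hder θ hθ
      exact hd.differentiableAt.differentiableWithinAt)
    (C := 2 * K)
    (fun θ hθ => by
      obtain ⟨d, hd, hle⟩ := hder θ hθ
      rw [hd.deriv]; exact hle)
    0 ⟨le_rfl, by positivity⟩ (Real.pi / 2) ⟨by positivity, le_rfl⟩ (by positivity)
  simp only [Real.sin_pi_div_two, Real.sin_zero] at key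
  rw [e]
  linarith

/-! ### Restricted means in terms of averages -/

/-- Unnormalised mean of coordinate `i` after restricting the coordinates outside `S` as in `x`. -/
noncomputable def bias {n : ℕ} (p : Cube n → ℝ) (S : Finset (Fin n)) (i : Fin n) (x : Cube n) : ℝ :=
  avg S (fun z => p z * bval (z i)) x

/-- Euclidean norm of the vector of unnormalised means over the free coordinates `S`. -/
noncomputable def biasNorm {n : ℕ} (p : Cube n → ℝ) (S : Finset (Fin n)) (x : Cube n) : ℝ :=
  √(∑ i ∈ S, bias p S i x ^ 2)

/-- The expectation, over restrictions with free coordinates exactly `S`, of the norm of the mean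
vector (see `sum_mul_restNorm`). -/
noncomputable def meanNorm {n : ℕ} (p : Cube n → ℝ) (S : Finset (Fin n)) : ℝ :=
  ∑ x, biasNorm p S x

lemma biasNorm_nonneg {n : ℕ} (p : Cube n → ℝ) (S : Finset (Fin n)) (x : Cube n) :
    0 ≤ biasNorm p S x := Real.sqrt_nonneg _

lemma meanNorm_nonneg {n : ℕ} (p : Cube n → ℝ) (S : Finset (Fin n)) : 0 ≤ meanNorm p S :=
  Finset.sum_nonneg fun x _ => biasNorm_nonneg p S x

lemma bias_insert {n : ℕ} (p : Cube n → ℝ) {S : Finset (Fin n)} {i : Fin n} (hi : i ∉ S)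
    (j : Fin n) (x : Cube n) :
    bias p (insert i S) j x = (bias p S j x + bias p S j (flipBit i x)) / 2 :=
  avg_insert hi _ x

lemma bias_insert_self {n : ℕ} (p : Cube n → ℝ) {S : Finset (Fin n)} {i : Fin n} (hi : i ∉ S)
    (x : Cube n) : bias p (insert i S) i x = lap i (avg S p) x * bval (x i) := by
  rw [bias_insert p hi]
  unfold bias
  rw [avg_bval_mul hi, avg_bval_mul hi, flipBit_same, bval_not]
  unfold lap
  ring

lemma abs_lap_avg {n : ℕ} (p : Cube n → ℝ) {S : Finset (Fin n)} {i : Fin n} (hi : i ∉ S)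
    (x : Cube n) : |lap i (avg S p) x| = |bias p (insert i S) i x| := by
  rw [bias_insert_self p hi, abs_mul, abs_bval, mul_one]

lemma lap_avg_of_mem {n : ℕ} (p : Cube n → ℝ) {S : Finset (Fin n)} {i : Fin n} (hi : i ∈ S)
    (x : Cube n) : lap i (avg S p) x = 0 := by
  unfold lap
  rw [avg_invariant hi]; simp

/-- Minkowski's inequality for finite sums of squares. -/
lemma sqrt_sum_add_sq_le {ι : Type*} (s : Finset ι) (a b : ι → ℝ) :
    √(∑ i ∈ s, (a i + b i) ^ 2) ≤ √(∑ i ∈ s, a i ^ 2) + √(∑ i ∈ s, b i ^ 2) := by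
  refine Real.sqrt_le_iff.2 ⟨by positivity, ?_⟩
  have h := Real.sum_mul_le_sqrt_mul_sqrt s a b
  have ha : 0 ≤ ∑ i ∈ s, a i ^ 2 := Finset.sum_nonneg fun i _ => sq_nonneg _
  have hb : 0 ≤ ∑ i ∈ s, b i ^ 2 := Finset.sum_nonneg fun i _ => sq_nonneg _
  have e : ∑ i ∈ s, (a i + b i) ^ 2 = ∑ i ∈ s, a i ^ 2 + 2 * ∑ i ∈ s, a i * b i
      + ∑ i ∈ s, b i ^ 2 := by
    rw [Finset.mul_sum, ← Finset.sum_add_distrib, ← Finset.sum_add_distrib]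
    exact Finset.sum_congr rfl fun i _ => by ring
  rw [e, add_sq, Real.sq_sqrt ha, Real.sq_sqrt hb]
  linarith

/-- Freeing one more coordinate `i` averages the mean vectors of the two refinements, so the new
norm exceeds the larger of the old ones by at most the new entry. -/
lemma biasNorm_insert_le {n : ℕ} (p : Cube n → ℝ) {S : Finset (Fin n)} {i : Fin n} (hi : i ∉ S)
    (x : Cube n) (hx : biasNorm p S (flipBit i x) ≤ biasNorm p S x) :
    biasNorm p (insert i S) x ≤ |bias p (insert i S) i x| + biasNorm p S x := by
  have h1 : √(∑ j ∈ S, bias p (insert i S) j x ^ 2) ≤ biasNorm p S x := by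
    have := sqrt_sum_add_sq_le S (fun j => bias p S j x / 2)
      (fun j => bias p S j (flipBit i x) / 2)
    have e : ∀ y, √(∑ j ∈ S, (bias p S j y / 2) ^ 2) = biasNorm p S y / 2 := by
      intro y
      unfold biasNorm
      simp_rw [div_pow]
      rw [← Finset.sum_div, Real.sqrt_div' _ (by norm_num), Real.sqrt_sq (by norm_num)]
    rw [e, e] at this
    simp_rw [bias_insert p hi, add_div]
    linarith
  unfold biasNorm at h1 ⊢
  rw [Finset.sum_insert hi]
  refine le_trans ?_ (add_le_add_right h1 _)
  have hB : 0 ≤ ∑ j ∈ S, bias p (insert i S) j x ^ 2 := Finset.sum_nonneg fun j _ => sq_nonneg _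
  refine Real.sqrt_le_iff.2 ⟨by positivity, ?_⟩
  rw [add_sq, sq_abs, Real.sq_sqrt hB]
  have : 0 ≤ 2 * |bias p (insert i S) i x| * √(∑ j ∈ S, bias p (insert i S) j x ^ 2) := by
    positivity
  linarith

/-- The share of the `i`-th coordinate in the norm `biasNorm p T x`; the shares of all `i ∈ T`
add up to that norm.  If the norm vanishes, so does the share. -/
noncomputable def share {n : ℕ} (p : Cube n → ℝ) (T : Finset (Fin n)) (i : Fin n) (x : Cube n) : ℝ :=
  bias p T i x ^ 2 / biasNorm p T x

lemma share_nonneg {n : ℕ} (p : Cube n → ℝ) (T : Finset (Fin n)) (i : Fin n) (x : Cube n) :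
    0 ≤ share p T i x := div_nonneg (sq_nonneg _) (biasNorm_nonneg _ _ _)

lemma sum_share {n : ℕ} (p : Cube n → ℝ) (T : Finset (Fin n)) (x : Cube n) :
    ∑ i ∈ T, share p T i x = biasNorm p T x := by
  unfold share
  rw [← Finset.sum_div]
  unfold biasNorm
  exact Real.div_sqrt

lemma share_mul {n : ℕ} (p : Cube n → ℝ) {T : Finset (Fin n)} {i : Fin n} (hi : i ∈ T)
    (x : Cube n) : share p T i x * biasNorm p T x = bias p T i x ^ 2 := by
  unfold share
  refine div_mul_cancel_of_imp fun h => ?_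
  unfold biasNorm at h
  rw [Real.sqrt_eq_zero (Finset.sum_nonneg fun i _ => sq_nonneg _),
    Finset.sum_eq_zero_iff_of_nonneg fun i _ => sq_nonneg _] at h
  exact h i hi

lemma bias_sq_le {n : ℕ} (p : Cube n → ℝ) {S : Finset (Fin n)} {i : Fin n} (hi : i ∉ S)
    (x : Cube n) (hx : biasNorm p S (flipBit i x) ≤ biasNorm p S x) :
    bias p (insert i S) i x ^ 2 ≤
      2 * share p (insert i S) i x * biasNorm p S x + share p (insert i S) i x ^ 2 := by
  have h1 := biasNorm_insert_le p hi x hx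
  have h2 := share_mul p (Finset.mem_insert_self i S) x
  have h3 := share_nonneg p (insert i S) i x
  have h4 := mul_le_mul_of_nonneg_left h1 h3
  rw [h2] at h4
  have h5 := sq_abs (bias p (insert i S) i x)
  nlinarith [sq_nonneg (share p (insert i S) i x - |bias p (insert i S) i x|)]

/-- Weights orienting each edge `{x, xⁱ}` towards the end at which `biasNorm p S` is larger, with
ties split evenly. -/
noncomputable def orient {n : ℕ} (p : Cube n → ℝ) (S : Finset (Fin n)) (i : Fin n) (x : Cube n) : ℝ :=
  if biasNorm p S (flipBit i x) < biasNorm p S x then 1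
  else if biasNorm p S (flipBit i x) = biasNorm p S x then 1 / 2 else 0

lemma orient_add {n : ℕ} (p : Cube n → ℝ) (S : Finset (Fin n)) (i : Fin n) (x : Cube n) :
    orient p S i x + orient p S i (flipBit i x) = 1 := by
  unfold orient
  rw [flipBit_flipBit]
  rcases lt_trichotomy (biasNorm p S (flipBit i x)) (biasNorm p S x) with h | h | h
  · simp [h, h.not_gt, h.ne']
  · simp [h]; norm_num
  · simp [h, h.not_gt, h.ne']

lemma orient_lap_sq_le {n : ℕ} (p : Cube n → ℝ) {S : Finset (Fin n)} {i : Fin n} (hi : i ∉ S)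
    (x : Cube n) : (orient p S i x * lap i (avg S p) x) ^ 2 ≤
      2 * share p (insert i S) i x * biasNorm p S x + share p (insert i S) i x ^ 2 := by
  have h0 : (lap i (avg S p) x) ^ 2 = bias p (insert i S) i x ^ 2 :=
    sq_eq_sq_iff_abs_eq_abs _ _ |>.2 (abs_lap_avg p hi x)
  have h3 := share_nonneg p (insert i S) i x
  have h4 := biasNorm_nonneg p S x
  rw [mul_pow, h0]
  unfold orient
  split_ifs with h h'
  · rw [one_pow, one_mul]; exact bias_sq_le p hi x h.le
  · have := bias_sq_le p hi x h'.le
    nlinarith [sq_nonneg (bias p (insert i S) i x)]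
  · rw [zero_pow two_ne_zero, zero_mul]; positivity

/-- The pointwise charging bound: the oriented gradient of `avg S p` is at most the norm at `S`
plus the shares of the newly freed coordinates. -/
lemma oriented_gradient_le {n : ℕ} (p : Cube n → ℝ) (U S : Finset (Fin n)) (x : Cube n) :
    √(∑ i ∈ U, (orient p S i x * lap i (avg S p) x) ^ 2)
      ≤ biasNorm p S x + ∑ i ∈ U \ S, share p (insert i S) i x := by
  have hW : ∀ i ∈ U \ S, 0 ≤ share p (insert i S) i x := fun i _ => share_nonneg _ _ _ _
  have hN := biasNorm_nonneg p S x
  have hs := Finset.sum_nonneg hW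
  refine Real.sqrt_le_iff.2 ⟨by positivity, ?_⟩
  have e : ∑ i ∈ U, (orient p S i x * lap i (avg S p) x) ^ 2
      = ∑ i ∈ U \ S, (orient p S i x * lap i (avg S p) x) ^ 2 := by
    symm
    refine Finset.sum_subset Finset.sdiff_subset fun i hi hi' => ?_
    have : i ∈ S := by
      by_contra h
      exact hi' (Finset.mem_sdiff.2 ⟨hi, h⟩)
    rw [lap_avg_of_mem p this]; simp
  rw [e]
  calc _ ≤ ∑ i ∈ U \ S, (2 * share p (insert i S) i x * biasNorm p S x
        + share p (insert i S) i x ^ 2) :=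
        Finset.sum_le_sum fun i hi => orient_lap_sq_le p (Finset.mem_sdiff.1 hi).2 x
    _ = 2 * biasNorm p S x * ∑ i ∈ U \ S, share p (insert i S) i x
        + ∑ i ∈ U \ S, share p (insert i S) i x ^ 2 := by
        rw [Finset.sum_add_distrib, Finset.mul_sum]
        congr 1
        exact Finset.sum_congr rfl fun i _ => by ring
    _ ≤ 2 * biasNorm p S x * ∑ i ∈ U \ S, share p (insert i S) i x
        + (∑ i ∈ U \ S, share p (insert i S) i x) ^ 2 := by
        gcongr
        exact Finset.sum_sq_le_sq_sum_of_nonneg hW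
    _ ≤ _ := by nlinarith

/-! ### Random sets of free coordinates -/

/-- Expectation of `F(S)` for a random subset `S` of `U` containing each element independently with
probability `σ`. -/
noncomputable def rset {n : ℕ} (σ : ℝ) (U : Finset (Fin n)) (F : Finset (Fin n) → ℝ) : ℝ :=
  ∑ S ∈ U.powerset, subsetProb σ U S * F S

lemma rset_insert {n : ℕ} (σ : ℝ) {U : Finset (Fin n)} {a : Fin n} (ha : a ∉ U)
    (F : Finset (Fin n) → ℝ) :
    rset σ (insert a U) F = (1 - σ) * rset σ U F + σ * rset σ U (fun S => F (insert a S)) := by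
  unfold rset
  rw [Finset.sum_powerset_insert ha, Finset.mul_sum, Finset.mul_sum]
  congr 1
  · refine Finset.sum_congr rfl fun S hS => ?_
    have hc := Finset.card_le_card (Finset.mem_powerset.1 hS)
    unfold subsetProb
    rw [Finset.card_insert_of_notMem ha, Nat.succ_sub hc, pow_succ]
    ring
  · refine Finset.sum_congr rfl fun S hS => ?_
    unfold subsetProb
    rw [Finset.card_insert_of_notMem ha, Finset.card_insert_of_notMem
      (fun h => ha (Finset.mem_powerset.1 hS h)), Nat.add_sub_add_right, pow_succ]
    ring

lemma rset_empty {n : ℕ} (σ : ℝ) (F : Finset (Fin n) → ℝ) : rset σ ∅ F = F ∅ := by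
  simp [rset, subsetProb]

lemma rset_congr {n : ℕ} (σ : ℝ) {U : Finset (Fin n)} {F G : Finset (Fin n) → ℝ}
    (h : ∀ S ⊆ U, F S = G S) : rset σ U F = rset σ U G :=
  Finset.sum_congr rfl fun S hS => by rw [h S (Finset.mem_powerset.1 hS)]

lemma subsetProb_nonneg {n : ℕ} {σ : ℝ} (h0 : 0 ≤ σ) (h1 : σ ≤ 1) (U S : Finset (Fin n)) :
    0 ≤ subsetProb σ U S := by
  have : 0 ≤ 1 - σ := by linarith
  unfold subsetProb; positivity

lemma rset_mono {n : ℕ} {σ : ℝ} (h0 : 0 ≤ σ) (h1 : σ ≤ 1) {U : Finset (Fin n)}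
    {F G : Finset (Fin n) → ℝ} (h : ∀ S ⊆ U, F S ≤ G S) : rset σ U F ≤ rset σ U G :=
  Finset.sum_le_sum fun S hS => mul_le_mul_of_nonneg_left (h S (Finset.mem_powerset.1 hS))
    (subsetProb_nonneg h0 h1 U S)

lemma rset_add {n : ℕ} (σ : ℝ) (U : Finset (Fin n)) (F G : Finset (Fin n) → ℝ) :
    rset σ U (fun S => F S + G S) = rset σ U F + rset σ U G := by
  simp [rset, mul_add, Finset.sum_add_distrib]

lemma rset_const_mul {n : ℕ} (σ c : ℝ) (U : Finset (Fin n)) (F : Finset (Fin n) → ℝ) :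
    rset σ U (fun S => c * F S) = c * rset σ U F := by
  simp [rset, Finset.mul_sum, mul_left_comm]

lemma rset_const {n : ℕ} (σ c : ℝ) (U : Finset (Fin n)) : rset σ U (fun _ => c) = c := by
  induction U using Finset.induction_on with
  | empty => rw [rset_empty]
  | insert a U ha ih => rw [rset_insert σ ha, ih]; ring

/-- Thinning a random set twice multiplies the retention probabilities. -/
lemma rset_rset {n : ℕ} (σ τ : ℝ) (U : Finset (Fin n)) (F : Finset (Fin n) → ℝ) :
    rset σ U (fun V => rset τ V F) = rset (σ * τ) U F := by
  induction U using Finset.induction_on generalizing F with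
  | empty => simp [rset_empty]
  | insert a U ha ih =>
    rw [rset_insert σ ha, rset_insert (σ * τ) ha, ih]
    have e : rset σ U (fun S => rset τ (insert a S) F)
        = (1 - τ) * rset (σ * τ) U F + τ * rset (σ * τ) U (fun S => F (insert a S)) := by
      rw [← ih, ← ih, ← rset_const_mul, ← rset_const_mul, ← rset_add]
      exact rset_congr σ fun S hS => rset_insert τ (fun h => ha (hS h)) F
    rw [e]; ring

lemma rset_one {n : ℕ} (U : Finset (Fin n)) (F : Finset (Fin n) → ℝ) : rset 1 U F = F U := by
  induction U using Finset.induction_on generalizing F with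
  | empty => rw [rset_empty]
  | insert a U ha ih => rw [rset_insert 1 ha, ih, ih]; ring

lemma rset_sum {n : ℕ} (σ : ℝ) (U : Finset (Fin n)) (w : Fin n → ℝ) :
    rset σ U (fun S => ∑ i ∈ S, w i) = σ * ∑ i ∈ U, w i := by
  induction U using Finset.induction_on with
  | empty => simp [rset_empty]
  | insert a U ha ih =>
    rw [rset_insert σ ha, ih, Finset.sum_insert ha]
    have e : rset σ U (fun S => ∑ i ∈ insert a S, w i) = w a + σ * ∑ i ∈ U, w i := by
      have h := rset_add σ U (fun _ => w a) (fun S => ∑ i ∈ S, w i)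
      rw [rset_const, ih] at h
      rw [← h]
      exact rset_congr σ fun S hS => Finset.sum_insert (fun h => ha (hS h))
    rw [e]; ring

/-- For retention probability `1/2`, choosing `S` and then `i ∈ U \ S` is the same as choosing
`T = S ∪ {i}` and then `i ∈ T`. -/
lemma rset_half_swap {n : ℕ} (U : Finset (Fin n)) (G : Finset (Fin n) → Fin n → ℝ) :
    rset (1 / 2) U (fun S => ∑ i ∈ U \ S, G (insert i S) i)
      = rset (1 / 2) U (fun T => ∑ i ∈ T, G T i) := by
  have hp : ∀ S ∈ U.powerset, subsetProb (1 / 2 : ℝ) U S = (1 / 2) ^ U.card := by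
    intro S hS
    have hc := Finset.card_le_card (Finset.mem_powerset.1 hS)
    unfold subsetProb
    rw [show (1 - 1 / 2 : ℝ) = 1 / 2 by norm_num, ← pow_add, Nat.add_sub_cancel' hc]
  unfold rset
  rw [Finset.sum_congr rfl fun S hS => by rw [hp S hS], ← Finset.mul_sum,
    Finset.sum_congr (s₁ := U.powerset) (f := fun T => _ * ∑ i ∈ T, G T i) rfl
      fun S hS => by rw [hp S hS], ← Finset.mul_sum, Finset.sum_sigma', Finset.sum_sigma']
  congr 1
  refine Finset.sum_bij' (fun a _ => ⟨insert a.2 a.1, a.2⟩) (fun a _ => ⟨a.1.erase a.2, a.2⟩)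
    ?_ ?_ ?_ ?_ ?_
  · rintro ⟨S, i⟩ h
    simp only [Finset.mem_sigma, Finset.mem_powerset, Finset.mem_sdiff] at h ⊢
    exact ⟨Finset.insert_subset h.2.1 h.1, Finset.mem_insert_self _ _⟩
  · rintro ⟨S, i⟩ h
    simp only [Finset.mem_sigma, Finset.mem_powerset, Finset.mem_sdiff] at h ⊢
    exact ⟨(Finset.erase_subset _ _).trans h.1, h.1 h.2, Finset.notMem_erase _ _⟩
  · rintro ⟨S, i⟩ h
    simp only [Finset.mem_sigma, Finset.mem_powerset, Finset.mem_sdiff] at h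
    simp [Finset.erase_insert h.2.2]
  · rintro ⟨S, i⟩ h
    simp only [Finset.mem_sigma, Finset.mem_powerset] at h
    simp [Finset.insert_erase h.2]
  · rintro ⟨S, i⟩ h
    rfl

/-! ### One scale, telescoping, and the last scale -/

/-- One halving of the free set costs at most `2π` times the expected norm of the mean vector. -/
lemma halving_step {n : ℕ} (p : Cube n → ℝ) (U : Finset (Fin n)) :
    rset (1 / 2) U (fun S => ∑ x, |avg S p x - avg U p x|)
      ≤ 2 * Real.pi * rset (1 / 2) U (meanNorm p) := by
  have h1 : ∀ S ⊆ U, ∑ x, |avg S p x - avg U p x| ≤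
      Real.pi * (meanNorm p S + ∑ i ∈ U \ S, ∑ x, share p (insert i S) i x) := by
    intro S hS
    have h := oriented_pisier U (avg S p) (orient p S) (orient_add p S)
    simp_rw [avg_avg hS] at h
    refine h.trans (mul_le_mul_of_nonneg_left ?_ Real.pi_pos.le)
    rw [Finset.sum_comm, meanNorm, ← Finset.sum_add_distrib]
    exact Finset.sum_le_sum fun x _ => oriented_gradient_le p U S x
  refine (rset_mono (by norm_num) (by norm_num) h1).trans ?_
  rw [rset_const_mul, rset_add, rset_half_swap U (fun T i => ∑ x, share p T i x)]
  have e : rset (1 / 2) U (fun T => ∑ i ∈ T, ∑ x, share p T i x) = rset (1 / 2) U (meanNorm p) := by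
    refine rset_congr _ fun T _ => ?_
    rw [Finset.sum_comm]
    exact Finset.sum_congr rfl fun x _ => sum_share p T x
  rw [e]
  exact le_of_eq (by ring)

lemma halving_telescope {n : ℕ} (p : Cube n → ℝ) (U : Finset (Fin n)) (k : ℕ) :
    ∑ x, |p x - avg U p x| ≤ 2 * Real.pi * ∑ j ∈ Finset.Icc 1 k, rset ((1 / 2) ^ j) U (meanNorm p)
      + rset ((1 / 2) ^ k) U (fun S => ∑ x, |p x - avg S p x|) := by
  induction k with
  | zero => simp [rset_one]
  | succ k ih =>
    rw [Finset.sum_Icc_succ_top (by omega), mul_add]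
    have h : ∀ V ⊆ U, ∑ x, |p x - avg V p x| ≤ rset (1 / 2) V
        (fun S => ∑ x, |p x - avg S p x|) + 2 * Real.pi * rset (1 / 2) V (meanNorm p) := by
      intro V _
      rw [← rset_const (1 / 2) (∑ x, |p x - avg V p x|) V]
      refine le_trans ?_ (add_le_add_right (halving_step p V) _)
      rw [← rset_add]
      refine rset_mono (by norm_num) (by norm_num) fun S _ => ?_
      rw [← Finset.sum_add_distrib]
      exact Finset.sum_le_sum fun x _ => abs_sub_le _ _ _
    have h2 := rset_mono (σ := (1 / 2) ^ k) (by positivity)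
      (pow_le_one₀ (by norm_num) (by norm_num)) h
    rw [rset_add, rset_const_mul, rset_rset, rset_rset, ← pow_succ] at h2
    linarith

lemma sum_abs_sub_avg_le {n : ℕ} (p : Cube n → ℝ) (S : Finset (Fin n)) :
    ∑ x, |p x - avg S p x| ≤ ∑ i ∈ S, ∑ x, |lap i p x| := by
  induction S using Finset.induction_on with
  | empty => simp [avg_empty]
  | insert i S hi ih =>
    rw [Finset.sum_insert hi]
    have h := sum_flipBit i (fun x => |p x - avg S p x|)
    have : ∑ x, |p x - avg (insert i S) p x| ≤ ∑ x, (|lap i p x| + |p x - avg S p x| / 2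
        + |p (flipBit i x) - avg S p (flipBit i x)| / 2) := by
      refine Finset.sum_le_sum fun x _ => ?_
      rw [avg_insert hi]
      have e : p x - (avg S p x + avg S p (flipBit i x)) / 2 = lap i p x + (p x - avg S p x) / 2
          + (p (flipBit i x) - avg S p (flipBit i x)) / 2 := by unfold lap; ring
      rw [e]
      refine (abs_add_three _ _ _).trans_eq ?_
      rw [abs_div, abs_div, abs_two]
    rw [Finset.sum_add_distrib, Finset.sum_add_distrib, ← Finset.sum_div, ← Finset.sum_div, h]
      at this
    linarith

lemma meanNorm_singleton {n : ℕ} (p : Cube n → ℝ) (i : Fin n) :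
    meanNorm p {i} = ∑ x, |lap i p x| := by
  refine Finset.sum_congr rfl fun x _ => ?_
  have h := abs_lap_avg p (Finset.notMem_empty i) x
  rw [show avg ∅ p = p from funext fun z => avg_empty p z] at h
  unfold biasNorm
  rw [Finset.sum_singleton, Real.sqrt_sq_eq_abs, h]
  rfl

/-- When at most half an element is retained on average, the singletons already account for the
distance to the average. -/
lemma last_scale {n : ℕ} (p : Cube n → ℝ) (U : Finset (Fin n)) {σ : ℝ} (h0 : 0 ≤ σ)
    (h1 : σ * U.card ≤ 1 / 2) (hle : σ ≤ 1) :
    rset σ U (fun S => ∑ x, |p x - avg S p x|) ≤ 2 * rset σ U (meanNorm p) := by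
  have hup : rset σ U (fun S => ∑ x, |p x - avg S p x|) ≤ σ * ∑ i ∈ U, ∑ x, |lap i p x| := by
    rw [← rset_sum]
    exact rset_mono h0 hle fun S _ => sum_abs_sub_avg_le p S
  have hlow : ∑ i ∈ U, σ / 2 * ∑ x, |lap i p x| ≤ rset σ U (meanNorm p) := by
    calc ∑ i ∈ U, σ / 2 * ∑ x, |lap i p x|
        ≤ ∑ i ∈ U, subsetProb σ U {i} * meanNorm p {i} := by
          refine Finset.sum_le_sum fun i _ => ?_
          rw [← meanNorm_singleton]
          refine mul_le_mul_of_nonneg_right ?_ (meanNorm_nonneg p _)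
          unfold subsetProb
          rw [Finset.card_singleton, pow_one]
          have hb := one_add_mul_le_pow (a := -σ) (by linarith) (U.card - 1)
          have hc : ((U.card - 1 : ℕ) : ℝ) ≤ U.card := by
            exact_mod_cast Nat.sub_le _ _
          have : (1 / 2 : ℝ) ≤ (1 - σ) ^ (U.card - 1) := by
            rw [← sub_eq_add_neg] at hb
            nlinarith
          nlinarith
      _ = ∑ S ∈ U.image (fun i => ({i} : Finset (Fin n))), subsetProb σ U S * meanNorm p S := by
          rw [Finset.sum_image]
          intro a _ b _ hab
          simpa using hab
      _ ≤ _ := by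
          refine Finset.sum_le_sum_of_subset_of_nonneg ?_ fun S _ _ =>
            mul_nonneg (subsetProb_nonneg h0 hle U S) (meanNorm_nonneg p S)
          intro S hS
          obtain ⟨i, hi, rfl⟩ := Finset.mem_image.1 hS
          simpa using hi
  rw [← Finset.mul_sum] at hlow
  linarith

/-! ### The expectation over restrictions -/

lemma starsOf_restrictOn {n : ℕ} (S : Finset (Fin n)) (x : Cube n) :
    starsOf (restrictOn S x) = S := by
  ext i
  unfold starsOf restrictOn
  by_cases h : i ∈ S <;> simp [h]

lemma mass_eq {n : ℕ} (p : Cube n → ℝ) (S : Finset (Fin n)) (x : Cube n) :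
    mass p (restrictOn S x) = 2 ^ S.card * avg S p x := by
  unfold mass avg
  rw [← mul_assoc, ← mul_pow]
  norm_num

lemma condMean_eq {n : ℕ} (p : Cube n → ℝ) (S : Finset (Fin n)) (x : Cube n) (i : Fin n) :
    condMean p (restrictOn S x) i = bias p S i x / avg S p x := by
  unfold condMean condProb
  rw [mass_eq]
  unfold bias
  conv_rhs => rw [avg]
  have h2 : (2 : ℝ) ^ S.card ≠ 0 := by positivity
  rw [inv_pow, mul_div_assoc, Finset.sum_div, Finset.mul_sum]
  refine Finset.sum_congr rfl fun y _ => ?_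
  split_ifs
  · rw [mul_comm ((2 : ℝ) ^ S.card), ← div_div]
    ring
  · simp

lemma restNorm_eq {n : ℕ} (p : Cube n → ℝ) (hp : ∀ x, 0 ≤ p x) (S : Finset (Fin n)) (x : Cube n) :
    restNorm p (restrictOn S x) = biasNorm p S x / avg S p x := by
  have e : ∑ i, (if restrictOn S x i = none then condMean p (restrictOn S x) i else 0) ^ 2
      = (∑ i ∈ S, bias p S i x ^ 2) / avg S p x ^ 2 := by
    rw [Finset.sum_div, ← Finset.sum_subset (Finset.subset_univ S)]
    · refine Finset.sum_congr rfl fun i hi => ?_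
      rw [condMean_eq]
      simp [restrictOn, hi, div_pow]
    · intro i _ hi
      simp [restrictOn, hi]
  unfold restNorm biasNorm
  rw [e, Real.sqrt_div' _ (sq_nonneg _), Real.sqrt_sq (avg_nonneg S hp x)]

/-- A subcube of mass zero has vanishing unnormalised means. -/
lemma biasNorm_eq_zero {n : ℕ} (p : Cube n → ℝ) (hp : ∀ x, 0 ≤ p x) (S : Finset (Fin n))
    (x : Cube n) (h : avg S p x = 0) : biasNorm p S x = 0 := by
  have h2 : (2 : ℝ)⁻¹ ^ S.card ≠ 0 := by positivity
  unfold avg at h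
  have h3 := (mul_eq_zero.1 h).resolve_left h2
  rw [Finset.sum_eq_zero_iff_of_nonneg fun y _ => by split_ifs; exacts [hp y, le_rfl]] at h3
  have hb : ∀ i, bias p S i x = 0 := by
    intro i
    unfold bias avg
    rw [Finset.sum_eq_zero, mul_zero]
    intro y hy
    have := h3 y hy
    split_ifs at this ⊢
    · simp only [this, zero_mul]
    · rfl
  unfold biasNorm
  simp [hb]

lemma avg_congr {n : ℕ} {S : Finset (Fin n)} {x y : Cube n} (h : agrees (restrictOn S x) y)
    (f : Cube n → ℝ) : avg S f y = avg S f x := by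
  unfold avg
  rw [restrictOn_congr h]

lemma avg_of_invariant {n : ℕ} (S : Finset (Fin n)) (g : Cube n → ℝ)
    (hg : ∀ x y, agrees (restrictOn S x) y → g y = g x) (x : Cube n) : avg S g x = g x := by
  have h := avg_one S x
  unfold avg at h ⊢
  have e : ∑ y, (if agrees (restrictOn S x) y then g y else 0)
      = (∑ y, if agrees (restrictOn S x) y then (1 : ℝ) else 0) * g x := by
    rw [Finset.sum_mul]
    refine Finset.sum_congr rfl fun y _ => ?_
    split_ifs with hy
    · rw [hg x y hy, one_mul]
    · simp
  rw [e, ← mul_assoc, h, one_mul]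

lemma sum_mul_restNorm {n : ℕ} (p : Cube n → ℝ) (hp : ∀ x, 0 ≤ p x) (S : Finset (Fin n)) :
    ∑ x, p x * restNorm p (restrictOn S x) = meanNorm p S := by
  have hinv : ∀ x y, agrees (restrictOn S x) y →
      restNorm p (restrictOn S y) = restNorm p (restrictOn S x) := fun x y h => by
    rw [restrictOn_congr h]
  have h := sum_mul_avg S p (fun x => restNorm p (restrictOn S x))
  simp_rw [avg_of_invariant S _ hinv] at h
  rw [Finset.sum_congr rfl fun x _ => mul_comm (p x) _, ← h]
  refine Finset.sum_congr rfl fun x _ => ?_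
  rw [restNorm_eq p hp]
  exact div_mul_cancel_of_imp fun h => biasNorm_eq_zero p hp S x h

/-- The tower property: resampling within the restricted distribution does not change the law. -/
lemma sum_condProb {n : ℕ} (p : Cube n → ℝ) (hp : ∀ x, 0 ≤ p x) (U : Finset (Fin n))
    (G : Cube n → ℝ) :
    ∑ x, p x * ∑ y, condProb p (restrictOn U x) y * G y = ∑ y, p y * G y := by
  simp_rw [Finset.mul_sum]
  rw [Finset.sum_comm]
  refine Finset.sum_congr rfl fun y _ => ?_
  rcases (hp y).eq_or_lt with h0 | hpos
  · refine (Finset.sum_eq_zero fun x _ => ?_).trans (by rw [← h0, zero_mul])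
    simp [condProb, ← h0]
  have hm : mass p (restrictOn U y) ≠ 0 := by
    refine ne_of_gt ?_
    unfold mass
    refine Finset.sum_pos' (fun z _ => by split_ifs; exacts [hp z, le_rfl]) ⟨y, Finset.mem_univ y, ?_⟩
    rw [if_pos (agrees_restrictOn.2 fun _ _ => rfl)]
    exact hpos
  have e : ∀ x, p x * (condProb p (restrictOn U x) y * G y)
      = (if agrees (restrictOn U y) x then p x else 0) * (p y * G y / mass p (restrictOn U y)) := by
    intro x
    unfold condProb
    by_cases h : agrees (restrictOn U x) y
    · rw [if_pos h, if_pos (agrees_symm h), restrictOn_congr h]; ring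
    · rw [if_neg h, if_neg (fun h' => h (agrees_symm h'))]; simp
  simp_rw [e]
  rw [← Finset.sum_mul]
  exact mul_div_cancel₀ _ hm

lemma sum_EDσCond {n : ℕ} (p : Cube n → ℝ) (hp : ∀ x, 0 ≤ p x) (U : Finset (Fin n)) (σ : ℝ) :
    ∑ x, p x * EDσCond p (restrictOn U x) σ (restNorm p) = rset σ U (meanNorm p) := by
  unfold EDσCond
  simp_rw [starsOf_restrictOn]
  rw [sum_condProb p hp U (fun y => ∑ S ∈ U.powerset, subsetProb σ U S * restNorm p (restrictOn S y))]
  simp_rw [Finset.mul_sum]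
  rw [Finset.sum_comm]
  refine Finset.sum_congr rfl fun S _ => ?_
  rw [← sum_mul_restNorm p hp S, Finset.mul_sum]
  exact Finset.sum_congr rfl fun x _ => by ring

/-- Main structural lemma.  There is a universal constant `c > 0` such
that for every `n ≥ 1`, every distribution `p` on `{-1,1}^n`, every `ε ∈ (0,1/4]` and
every set `J ⊆ [n]` such that `p` is `ε`-far from every junta distribution over `J`,
with `σ = 1/2`,
`Σ_{j=1}^{⌈log₂(2n)⌉} E_{ρ∼D_{[n]∖J}(p)} E_{ν∼D_{σ^j}(p|ρ)} ‖μ((p|ρ)|ν)‖₂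
  ≥ ε / (log₂(n/ε))^c`. -/
theorem statement0 :
    ∃ c : ℝ, 0 < c ∧
      ∀ (n : ℕ), 0 < n →
      ∀ (p : Cube n → ℝ), IsDist p →
      ∀ ε : ℝ, 0 < ε → ε ≤ 1 / 4 →
      ∀ J : Finset (Fin n),
      (∀ g : Cube n → ℝ, IsDist g → JuntaOn J g → ε ≤ dtv p g) →
      ε / (Real.logb 2 ((n : ℝ) / ε)) ^ c ≤
        ∑ j ∈ Finset.Icc 1 ⌈Real.logb 2 (2 * (n : ℝ))⌉₊,
          ∑ x, p x *
            EDσCond p (restrictOn Jᶜ x) ((1 / 2 : ℝ) ^ j) (restNorm p) := by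
  refine ⟨3, by norm_num, ?_⟩
  intro n hn p hp ε hε hε4 J hJ
  have hn1 : (1 : ℝ) ≤ n := by exact_mod_cast hn
  simp_rw [sum_EDσCond p hp.1]
  set k := ⌈Real.logb 2 (2 * (n : ℝ))⌉₊ with hk
  set M := ∑ j ∈ Finset.Icc 1 k, rset ((1 / 2 : ℝ) ^ j) Jᶜ (meanNorm p) with hS
  have hσ : ∀ j : ℕ, (0 : ℝ) ≤ (1 / 2) ^ j ∧ ((1 / 2 : ℝ) ^ j) ≤ 1 := fun j =>
    ⟨by positivity, pow_le_one₀ (by norm_num) (by norm_num)⟩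
  have hnn : ∀ j : ℕ, 0 ≤ rset ((1 / 2 : ℝ) ^ j) Jᶜ (meanNorm p) := fun j =>
    Finset.sum_nonneg fun S _ => mul_nonneg (subsetProb_nonneg (hσ j).1 (hσ j).2 _ _)
      (meanNorm_nonneg p S)
  have hlog1 : 1 ≤ Real.logb 2 (2 * (n : ℝ)) := by
    rw [Real.le_logb_iff_rpow_le (by norm_num) (by positivity), Real.rpow_one]; linarith
  have hk1 : 1 ≤ k := Nat.one_le_ceil_iff.2 (by linarith)
  have hpow : 2 * (n : ℝ) ≤ 2 ^ k := by
    have h := Nat.le_ceil (Real.logb 2 (2 * (n : ℝ)))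
    rw [Real.logb_le_iff_le_rpow (by norm_num) (by positivity), Real.rpow_natCast] at h
    exact h
  have hsmall : (1 / 2 : ℝ) ^ k * (Jᶜ : Finset (Fin n)).card ≤ 1 / 2 := by
    have hc : ((Jᶜ : Finset (Fin n)).card : ℝ) ≤ n := by
      exact_mod_cast (Finset.card_le_univ _).trans_eq (Fintype.card_fin n)
    rw [div_pow, one_pow, div_mul_eq_mul_div, one_mul, div_le_div_iff₀ (by positivity) (by norm_num)]
    linarith
  have hlast := last_scale p Jᶜ (hσ k).1 hsmall (hσ k).2
  have htel := halving_telescope p Jᶜ k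
  have hle : rset ((1 / 2 : ℝ) ^ k) Jᶜ (meanNorm p) ≤ M :=
    Finset.single_le_sum (f := fun j => rset ((1 / 2 : ℝ) ^ j) Jᶜ (meanNorm p))
      (fun j _ => hnn j) (Finset.mem_Icc.2 ⟨hk1, le_rfl⟩)
  have hS0 : 0 ≤ M := (hnn k).trans hle
  -- The average of `p` over the coordinates outside `J` is a junta distribution over `J`.
  have hfar := hJ (avg Jᶜ p) ⟨avg_nonneg _ hp.1, by rw [sum_avg, hp.2]⟩ (by
    intro x y h
    refine (avg_congr ?_ p).symm
    rw [agrees_restrictOn]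
    intro i hi
    rw [Finset.mem_compl, not_not] at hi
    exact (h i hi).symm)
  unfold dtv at hfar
  have hpi := Real.pi_lt_d2
  have h5 : ε ≤ 5 * M := by
    rw [← hS] at htel
    nlinarith [mul_le_mul_of_nonneg_right hpi.le hS0]
  have hlog2 : 2 ≤ Real.logb 2 ((n : ℝ) / ε) := by
    rw [Real.le_logb_iff_rpow_le (by norm_num) (by positivity), le_div_iff₀ hε]
    norm_num
    linarith
  have h8 : (8 : ℝ) ≤ Real.logb 2 ((n : ℝ) / ε) ^ (3 : ℝ) := by
    calc (8 : ℝ) = 2 ^ (3 : ℝ) := by norm_num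
      _ ≤ _ := Real.rpow_le_rpow (by norm_num) hlog2 (by norm_num)
  rw [div_le_iff₀ (by linarith)]
  nlinarith

end JuntaPaper
end

section
/- Let k ∈ ℕ₊, let x ∈ [−1,1]^k with ‖x‖₂ ≥ γ for some γ > 0, and let t = ⌊log₂(2k)⌋. Then there exists β ∈ {0,1,…,t} such that the number of indices i ∈ [k] with |x_i| ≥ γ / (2·√(2^β · t)) is at least 2^β. -/
/-!
A dyadic pigeonhole argument. Write `τ_β² = γ² / (4 · 2^β · t)` and `S_β = {i : τ_β ≤ |x i|}`, and
suppose `|S_β| < 2^β` for every `β ≤ t`. Then `S_0` is empty, and each layer `S_{β+1} \ S_β` carries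
mass at most `2^{β+1} τ_β² = γ² / (2t)` in `∑ x i ^ 2`, so `S_t` carries at most `γ² / 2`. Off `S_t`
there are at most `k ≤ 2^t` coordinates, carrying at most `2^t τ_t² ≤ γ² / 4`. Hence
`∑ x i ^ 2 ≤ 3γ² / 4 < γ²`, contradicting the norm bound.
-/

open Finset

theorem sq_lt_of_abs_lt_threshold {γ t y : ℝ} (ht : 0 < t) (n : ℕ)
    (h : |y| < γ / (2 * Real.sqrt (2 ^ n * t))) :
    y ^ 2 < γ ^ 2 / (4 * (2 ^ n * t)) := by
  have h0 : (0 : ℝ) ≤ 2 ^ n * t := by positivity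
  have h1 := pow_lt_pow_left₀ h (abs_nonneg y) two_ne_zero
  rw [sq_abs, div_pow, mul_pow, Real.sq_sqrt h0] at h1
  norm_num at h1 ⊢
  exact h1

/-- Let `k ≥ 1`, `x ∈ [-1,1]^k` with `‖x‖₂ ≥ γ` for some `γ > 0`, and
`t = ⌊log₂(2k)⌋`.  Then there exists `β ∈ {0,…,t}` such that the number of indices
`i ∈ [k]` with `|x i| ≥ γ / (2√(2^β t))` is at least `2^β`. -/
theorem statement1 (k : ℕ) (hk : 0 < k) (x : Fin k → ℝ) (hx : ∀ i, |x i| ≤ 1)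
    (γ : ℝ) (hγ : 0 < γ) (hnorm : γ ≤ Real.sqrt (∑ i, x i ^ 2)) :
    ∃ β ≤ Nat.log 2 (2 * k),
      2 ^ β ≤ (Finset.univ.filter (fun i : Fin k =>
        γ / (2 * Real.sqrt (2 ^ β * (Nat.log 2 (2 * k) : ℝ))) ≤ |x i|)).card := by
  by_contra! hcon
  have hlt : 2 * k < 2 ^ (Nat.log 2 (2 * k) + 1) := Nat.lt_pow_succ_log_self (by norm_num) _
  have ht1 : 1 ≤ Nat.log 2 (2 * k) := Nat.log_pos (by norm_num) (by omega)
  set t := Nat.log 2 (2 * k) with ht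
  have htR : (1 : ℝ) ≤ t := by exact_mod_cast ht1
  have htpos : (0 : ℝ) < t := by linarith
  set S : ℕ → Finset (Fin k) := fun β => Finset.univ.filter (fun i : Fin k =>
    γ / (2 * Real.sqrt (2 ^ β * (t : ℝ))) ≤ |x i|) with hS
  have hout : ∀ n i, i ∉ S n → x i ^ 2 ≤ γ ^ 2 / (4 * (2 ^ n * t)) := by
    intro n i hi
    simp only [hS, mem_filter, mem_univ, true_and, not_le] at hi
    exact (sq_lt_of_abs_lt_threshold htpos n hi).le
  have hlayer : ∀ n ≤ t, ∑ i ∈ S n, x i ^ 2 ≤ n * (γ ^ 2 / (2 * t)) := by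
    intro n
    induction n with
    | zero =>
      intro h
      have h0 : (S 0).card < 2 ^ 0 := hcon 0 h
      have h1 : S 0 = ∅ := by
        rw [← Finset.card_eq_zero]
        simpa using h0
      simp [h1]
    | succ n ih =>
      intro h
      have hc : (S (n + 1)).card < 2 ^ (n + 1) := hcon (n + 1) h
      have h1 : ∑ i ∈ S (n + 1), x i ^ 2 ≤ ∑ i ∈ S n, x i ^ 2 + ∑ i ∈ S (n + 1) \ S n, x i ^ 2 := by
        rw [← Finset.sum_union Finset.disjoint_sdiff, Finset.union_sdiff_self_eq_union]
        exact Finset.sum_le_sum_of_subset_of_nonneg Finset.subset_union_right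
          fun i _ _ => sq_nonneg _
      have h2 : ∑ i ∈ S (n + 1) \ S n, x i ^ 2
          ≤ (S (n + 1) \ S n).card • (γ ^ 2 / (4 * (2 ^ n * t))) :=
        Finset.sum_le_card_nsmul _ _ _ fun i hi => hout n i (Finset.mem_sdiff.1 hi).2
      have h3 : ((S (n + 1) \ S n).card : ℝ) ≤ 2 ^ (n + 1) := by
        exact_mod_cast (Finset.card_le_card Finset.sdiff_subset).trans hc.le
      rw [nsmul_eq_mul] at h2
      have h4 : ((S (n + 1) \ S n).card : ℝ) * (γ ^ 2 / (4 * (2 ^ n * t)))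
          ≤ 2 ^ (n + 1) * (γ ^ 2 / (4 * (2 ^ n * t))) :=
        mul_le_mul_of_nonneg_right h3 (by positivity)
      have h5 : (2 : ℝ) ^ (n + 1) * (γ ^ 2 / (4 * (2 ^ n * t))) = γ ^ 2 / (2 * t) := by
        rw [pow_succ]
        field_simp
        norm_num
      have h6 := ih (by omega)
      push_cast
      linarith
  have hA : ∑ i ∈ S t, x i ^ 2 ≤ γ ^ 2 / 2 := by
    refine (hlayer t le_rfl).trans_eq ?_
    field_simp
  have hB : ∑ i ∈ (S t)ᶜ, x i ^ 2 ≤ γ ^ 2 / 4 := by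
    have h2 : ∑ i ∈ (S t)ᶜ, x i ^ 2 ≤ ((S t)ᶜ).card • (γ ^ 2 / (4 * (2 ^ t * t))) :=
      Finset.sum_le_card_nsmul _ _ _ fun i hi => hout t i (Finset.mem_compl.1 hi)
    rw [nsmul_eq_mul] at h2
    have h3 : (((S t)ᶜ).card : ℝ) ≤ 2 ^ t := by
      have h4 : ((S t)ᶜ).card ≤ k := (Finset.card_le_univ _).trans_eq (Fintype.card_fin k)
      have h5 : k ≤ 2 ^ t := by
        rw [pow_succ] at hlt
        omega
      exact_mod_cast h4.trans h5
    have h4 : (((S t)ᶜ).card : ℝ) * (γ ^ 2 / (4 * (2 ^ t * t)))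
        ≤ 2 ^ t * (γ ^ 2 / (4 * (2 ^ t * t))) :=
      mul_le_mul_of_nonneg_right h3 (by positivity)
    have h5 : (2 : ℝ) ^ t * (γ ^ 2 / (4 * (2 ^ t * t))) = γ ^ 2 / 4 / t := by
      field_simp
    have h6 : γ ^ 2 / 4 / t ≤ γ ^ 2 / 4 := div_le_self (by positivity) htR
    linarith
  have hsum := Finset.sum_add_sum_compl (S t) (fun i => x i ^ 2)
  have hsq : γ ^ 2 ≤ ∑ i, x i ^ 2 := (Real.le_sqrt' hγ).1 hnorm
  have hγ2 : 0 < γ ^ 2 := by positivity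
  linarith
end

section
/- Fix m ∈ ℕ₊ and let h be any distribution on {−1,1}^m. For any real numbers σ₁, σ₂ with 0 ≤ σ₂ ≤ σ₁ ≤ 1/m, we have E_{ν∼D_{σ₂}(h)}[ ‖μ(h|ν)‖₂ ] ≤ E_{ν∼D_{σ₁}(h)}[ ‖μ(h|ν)‖₂ ]. -/
/-!
Write the expectation at parameter `σ` as
`∑ x, h x * ∑ S, σ ^ |S| * (1 - σ) ^ (m - |S|) * restNorm h (restrictOn S x)`.
Every coefficient is nonnegative, and the one for `S = ∅` vanishes, since nothing is free
there. For `|S| = k ≥ 1` the weight `σ ^ k * (1 - σ) ^ (m - k)` is nondecreasing on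
`[0, k / m]`, which contains `[0, 1 / m]`; `weight_mono` proves it on `[0, 1 / m]` from
Bernoulli's inequality. The claim follows term by term.
-/

open Finset

namespace JuntaPaper

/-- The monotonicity behind `weight_mono`: `σ ↦ σ (1 - σ) ^ j` is nondecreasing up to its maximum
at `1 / (j + 1)`. -/
lemma mul_one_sub_pow_mono (j : ℕ) {s t : ℝ} (ht : 0 ≤ t) (hts : t ≤ s)
    (hs : ((j : ℝ) + 1) * s ≤ 1) : t * (1 - t) ^ j ≤ s * (1 - s) ^ j := by
  have hj : (0 : ℝ) ≤ j := Nat.cast_nonneg j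
  have hs0 : 0 ≤ s := ht.trans hts
  have hs1 : s ≤ 1 := by nlinarith
  rcases (hts.trans hs1).eq_or_lt with h | h
  · have : s = t := by linarith
    rw [this]
  have h1t : 0 < 1 - t := by linarith
  -- Bernoulli's inequality for the ratio `(1 - s) / (1 - t) = 1 - (s - t) / (1 - t)`.
  have hu : (s - t) / (1 - t) ≤ 1 := by
    rw [div_le_one h1t]; linarith
  have hb := one_add_mul_le_pow (a := -((s - t) / (1 - t))) (by linarith) j
  have hr : 1 + -((s - t) / (1 - t)) = (1 - s) / (1 - t) := by
    field_simp
    ring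
  rw [hr, div_pow] at hb
  have hkey : t ≤ s * (1 + j * -((s - t) / (1 - t))) := by
    have : s * (1 + j * -((s - t) / (1 - t))) - t
        = (s - t) * (1 - t - j * s) / (1 - t) := by
      field_simp
      ring
    have : 0 ≤ (s - t) * (1 - t - j * s) / (1 - t) :=
      div_nonneg (mul_nonneg (by linarith) (by linarith)) h1t.le
    linarith
  have hfin := hkey.trans (mul_le_mul_of_nonneg_left hb hs0)
  rwa [← mul_div_assoc, le_div_iff₀ (pow_pos h1t j)] at hfin

lemma weight_mono {k m : ℕ} (hk : 1 ≤ k) (hkm : k ≤ m) {s t : ℝ} (ht : 0 ≤ t) (hts : t ≤ s)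
    (hs : (m : ℝ) * s ≤ 1) : t ^ k * (1 - t) ^ (m - k) ≤ s ^ k * (1 - s) ^ (m - k) := by
  obtain ⟨k, rfl⟩ : ∃ l, k = l + 1 := ⟨k - 1, by omega⟩
  have hs0 : 0 ≤ s := ht.trans hts
  have hm : (1 : ℝ) ≤ m := by exact_mod_cast hk.trans hkm
  have hs1 : s ≤ 1 := by nlinarith
  have hj : ((m - (k + 1) : ℕ) : ℝ) + 1 ≤ m := by exact_mod_cast (by omega)
  have h := mul_one_sub_pow_mono (m - (k + 1)) ht hts
    ((mul_le_mul_of_nonneg_right hj hs0).trans hs)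
  have h' := mul_le_mul (pow_le_pow_left₀ ht hts k) h
    (mul_nonneg ht (pow_nonneg (by linarith) _)) (pow_nonneg hs0 k)
  rw [pow_succ, pow_succ, mul_assoc, mul_assoc]
  exact h'

lemma restNorm_restrictOn_empty {n : ℕ} (p : Cube n → ℝ) (x : Cube n) :
    restNorm p (restrictOn ∅ x) = 0 := by
  simp [restNorm, restrictOn]

lemma condProb_nonneg {n : ℕ} {p : Cube n → ℝ} (hp : IsDist p) (ρ : Restr n) (x : Cube n) :
    0 ≤ condProb p ρ x := by
  have h (y : Cube n) : 0 ≤ if agrees ρ y then p y else 0 := by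
    split_ifs
    exacts [hp.1 y, le_rfl]
  exact div_nonneg (h x) (Finset.sum_nonneg fun y _ => h y)

/-- Fix `m ≥ 1` and a distribution `h` on `{-1,1}^m`.  For any
`0 ≤ σ₂ ≤ σ₁ ≤ 1/m`, `E_{ν∼D_{σ₂}(h)}[‖μ(h|ν)‖₂] ≤ E_{ν∼D_{σ₁}(h)}[‖μ(h|ν)‖₂]`. -/
theorem statement3 (m : ℕ) (hm : 0 < m) (h : Cube m → ℝ) (hdist : IsDist h)
    (σ₁ σ₂ : ℝ) (h2 : 0 ≤ σ₂) (h21 : σ₂ ≤ σ₁) (h1 : σ₁ ≤ 1 / (m : ℝ)) :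
    EDσCond h (allStars m) σ₂ (restNorm h) ≤ EDσCond h (allStars m) σ₁ (restNorm h) := by
  unfold EDσCond
  refine Finset.sum_le_sum fun x _ => mul_le_mul_of_nonneg_left ?_ (condProb_nonneg hdist _ x)
  refine Finset.sum_le_sum fun S hS => ?_
  rcases S.eq_empty_or_nonempty with rfl | hne
  · simp [restNorm_restrictOn_empty]
  have hcard : (starsOf (allStars m)).card = m := by simp [starsOf, allStars]
  have hle := Finset.card_le_card (Finset.mem_powerset.1 hS)
  have hs : (m : ℝ) * σ₁ ≤ 1 := by
    rwa [le_div_iff₀' (by exact_mod_cast hm)] at h1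
  refine mul_le_mul_of_nonneg_right ?_ (Real.sqrt_nonneg _)
  unfold subsetProb
  rw [hcard] at hle ⊢
  exact weight_mono hne.card_pos hle h2 h21 hs

end JuntaPaper
end

section
/- There exist constants c₁* > 0 and c₂* > 0 such that for every n ∈ ℕ₊, every product distribution p on {−1,1}^n with μ(p) ≠ 0 satisfies dtv(p, U) ≥ (1/8 − c₁*·‖μ(p)‖_∞ / ‖μ(p)‖₂) · min(c₂*, ‖μ(p)‖₂/4). -/
/-!
The distance of a product distribution `p` with mean `μ` from uniform is bounded below by testing
with the bounded function `x ↦ sin (l ⟨μ, x⟩)`, whose uniform expectation is `0`. Under `p` its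
expectation is the imaginary part of the characteristic function, that is of
`∏ (cos (l μᵢ) + i μᵢ sin (l μᵢ))` (`sum_prodMass_mul_sin`). With `l = 1 / (2 max(‖μ‖₂, ‖μ‖₂²))`
all factors are close to `1`, and the imaginary part is comparable to
`∑ μᵢ sin (l μᵢ) ≈ l ‖μ‖₂² = min(1, ‖μ‖₂) / 2` (`im_prod_bounds`). This gives
`dtv(p, U) ≥ min(1, ‖μ‖₂) / 32` (`dtv_prodMass_ge`) without any use of `‖μ‖_∞`; the
`‖μ‖_∞` term only weakens the claimed bound, so `c₁ = 1` and `c₂ = 1 / 4` will do.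
-/

open Finset

namespace JuntaPaper

/-- `p` is a product distribution on the cube: the coordinates are independent, with
the `i`-th coordinate equal to `1` with probability `(1+μᵢ)/2` for some `μ ∈ [-1,1]^n`. -/
def IsProduct {n : ℕ} (p : Cube n → ℝ) : Prop :=
  ∃ μ : Fin n → ℝ, (∀ i, |μ i| ≤ 1) ∧
    ∀ x, p x = ∏ i, (if x i then (1 + μ i) / 2 else (1 - μ i) / 2)

/-! ### Product distributions and their characteristic functions -/

/-- The probability mass at `x` of the product distribution with mean vector `ν`. -/
noncomputable def prodMass {n : ℕ} (ν : Fin n → ℝ) (x : Cube n) : ℝ :=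
  ∏ i, (if x i then (1 + ν i) / 2 else (1 - ν i) / 2)

/-- The characteristic function of a product distribution factors over the coordinates. -/
lemma charFun_prodMass {n : ℕ} (ν a : Fin n → ℝ) :
    ∑ x : Cube n, (prodMass ν x : ℂ) * Complex.exp (((∑ i, a i * bval (x i) : ℝ) : ℂ) * Complex.I)
      = ∏ i, (⟨Real.cos (a i), ν i * Real.sin (a i)⟩ : ℂ) := by
  have h : ∀ i, (⟨Real.cos (a i), ν i * Real.sin (a i)⟩ : ℂ) =
      ∑ b : Bool, ((if b then (1 + ν i) / 2 else (1 - ν i) / 2 : ℝ) : ℂ) *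
        Complex.exp (((a i * bval b : ℝ) : ℂ) * Complex.I) := by
    intro i
    rw [Fintype.sum_bool, Complex.exp_mul_I, Complex.exp_mul_I, ← Complex.ofReal_cos,
      ← Complex.ofReal_cos, ← Complex.ofReal_sin, ← Complex.ofReal_sin]
    apply Complex.ext
    · simp [bval, Complex.cos_ofReal_re]; ring
    · simp [bval, Complex.sin_ofReal_re]; ring
  simp_rw [h]
  rw [Finset.prod_univ_sum, Fintype.piFinset_univ]
  refine Finset.sum_congr rfl fun x _ => ?_
  rw [Finset.prod_mul_distrib, ← Complex.exp_sum, ← Finset.sum_mul, prodMass]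
  push_cast
  rfl

/-- The imaginary part of `charFun_prodMass`. -/
lemma sum_prodMass_mul_sin {n : ℕ} (ν a : Fin n → ℝ) :
    ∑ x : Cube n, prodMass ν x * Real.sin (∑ i, a i * bval (x i))
      = (∏ i, (⟨Real.cos (a i), ν i * Real.sin (a i)⟩ : ℂ)).im := by
  rw [← charFun_prodMass, Complex.im_sum]
  refine Finset.sum_congr rfl fun x _ => ?_
  rw [Complex.im_ofReal_mul, Complex.exp_ofReal_mul_I_im]

lemma prodMass_zero {n : ℕ} : prodMass (0 : Fin n → ℝ) = uniform n := by
  funext x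
  simp [prodMass, uniform]

lemma meanVec_prodMass {n : ℕ} (ν : Fin n → ℝ) : meanVec (prodMass ν) = ν := by
  funext i
  have h : ∀ x : Cube n, prodMass ν x * bval (x i) =
      ∏ j, (if x j then (1 + ν j) / 2 else (1 - ν j) / 2) * (if j = i then bval (x j) else 1) := by
    intro x
    rw [Finset.prod_mul_distrib, prodMass]
    simp
  unfold meanVec
  simp_rw [h]
  have := Finset.prod_univ_sum (fun _ : Fin n => (Finset.univ : Finset Bool))
    (fun j b => (if b then (1 + ν j) / 2 else (1 - ν j) / 2) * (if j = i then bval b else 1))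
  rw [Fintype.piFinset_univ] at this
  rw [← this]
  have h2 : ∀ j, (∑ b : Bool, (if b then (1 + ν j) / 2 else (1 - ν j) / 2) *
      (if j = i then bval b else 1)) = if j = i then ν j else 1 := by
    intro j
    rw [Fintype.sum_bool]
    by_cases hj : j = i
    · simp [hj, bval]; ring
    · simp [hj]; ring
  simp_rw [h2]
  simp

/-! ### Test functions and total variation -/

/-- A function bounded by `1` distinguishes `p` from `q` by at most twice their distance. -/
lemma sum_sub_le_two_dtv {α : Type*} [Fintype α] (p q g : α → ℝ) (hg : ∀ x, |g x| ≤ 1) :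
    ∑ x, p x * g x - ∑ x, q x * g x ≤ 2 * dtv p q := by
  have h : ∑ x, p x * g x - ∑ x, q x * g x ≤ ∑ x, |p x - q x| := by
    rw [← Finset.sum_sub_distrib]
    refine Finset.sum_le_sum fun x _ => ?_
    rw [← sub_mul]
    refine (le_abs_self _).trans ?_
    rw [abs_mul]
    exact mul_le_of_le_one_right (abs_nonneg _) (hg x)
  unfold dtv
  linarith

/-! ### Products of complex numbers close to 1 -/

/-- For numbers `cᵢ + i sᵢ` of the unit disc close to `1` with `sᵢ ≥ 0`, the imaginary part of
the product is `∑ sᵢ` up to a relative error controlled by `∑ (1 - cᵢ)` and `∑ sᵢ`. The bounds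
on the norm, on the imaginary part from above and on the real part are what the induction needs. -/
lemma im_prod_bounds {ι : Type*} [DecidableEq ι] (c s : ι → ℝ) (T : Finset ι)
    (hc0 : ∀ i, 0 ≤ c i) (hc1 : ∀ i, c i ≤ 1) (hs : ∀ i, 0 ≤ s i)
    (hcs : ∀ i, c i ^ 2 + s i ^ 2 ≤ 1) :
    let z : ℂ := ∏ i ∈ T, (⟨c i, s i⟩ : ℂ)
    let B := ∑ i ∈ T, (1 - c i)
    let S := ∑ i ∈ T, s i
    z.re ^ 2 + z.im ^ 2 ≤ 1 ∧ |z.im| ≤ S ∧ 1 - B - S ^ 2 ≤ z.re ∧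
      S * (1 - 2 * B - S ^ 2) ≤ z.im := by
  induction T using Finset.induction_on with
  | empty => simp
  | insert i T hi ih =>
    simp only at ih
    simp only [Finset.prod_insert hi, Finset.sum_insert hi, Complex.mul_re, Complex.mul_im]
    have hB : 0 ≤ ∑ i ∈ T, (1 - c i) := Finset.sum_nonneg fun j _ => by linarith [hc1 j]
    have hS : 0 ≤ ∑ i ∈ T, s i := Finset.sum_nonneg fun j _ => hs j
    generalize (∏ i ∈ T, (⟨c i, s i⟩ : ℂ)) = z at *
    generalize ∑ i ∈ T, (1 - c i) = B at *
    generalize ∑ i ∈ T, s i = S at *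
    obtain ⟨h1, h2, h3, h4⟩ := ih
    have c0 := hc0 i
    have c1 := hc1 i
    have s0 := hs i
    have cs := hcs i
    generalize c i = c at *
    generalize s i = s at *
    generalize z.re = x at *
    generalize z.im = y at *
    obtain ⟨hy1, hy2⟩ := abs_le.1 h2
    have hx : |x| ≤ 1 := abs_le_one_iff_mul_self_le_one.2 (by nlinarith)
    obtain ⟨hx1, hx2⟩ := abs_le.1 hx
    have e1 : y * s ≤ S * s := mul_le_mul_of_nonneg_right hy2 s0
    have e2 : (1 - c) * x ≤ (1 - c) := by nlinarith
    have e3 : (1 - c) * y ≤ (1 - c) * S := mul_le_mul_of_nonneg_left hy2 (by linarith)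
    have e4 : s * (1 - B - S ^ 2) ≤ s * x := mul_le_mul_of_nonneg_left h3 s0
    have f1 : 0 ≤ S * s := by positivity
    have f2 : 0 ≤ (1 - c) * S := mul_nonneg (by linarith) hS
    have f3 : 0 ≤ (1 - c) * s := mul_nonneg (by linarith) s0
    have f4 : 0 ≤ s * B := by positivity
    have f5 : 0 ≤ S * S * s := by positivity
    have f6 : 0 ≤ S * s * s := by positivity
    have f7 : 0 ≤ s * s * s := by positivity
    refine ⟨?_, ?_, ?_, ?_⟩
    · calc (c * x - s * y) ^ 2 + (c * y + s * x) ^ 2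
          = (c ^ 2 + s ^ 2) * (x ^ 2 + y ^ 2) := by ring
        _ ≤ 1 := mul_le_one₀ cs (by positivity) h1
    · rw [abs_le]
      constructor <;> nlinarith
    · nlinarith
    · nlinarith

/-- Bounds on `u sin (l u)`, an even function of `u`. -/
lemma mul_sin_bounds {l u : ℝ} (hl : 0 ≤ l) (hu : l * |u| ≤ 1) :
    l * u ^ 2 / 2 ≤ u * Real.sin (l * u) ∧ u * Real.sin (l * u) ≤ l * u ^ 2 := by
  have key : ∀ v : ℝ, 0 ≤ v → l * v ≤ 1 →
      l * v ^ 2 / 2 ≤ v * Real.sin (l * v) ∧ v * Real.sin (l * v) ≤ l * v ^ 2 := by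
    intro v hv hlv
    have h0 : 0 ≤ l * v := by positivity
    have h1 : Real.sin (l * v) ≤ l * v := Real.sin_le h0
    have h2 : l * v / 2 ≤ Real.sin (l * v) := by
      rcases h0.eq_or_lt with h | h
      · simp [← h]
      · have := Real.sin_gt_sub_cube h
        nlinarith [mul_nonneg h0 (mul_nonneg h0 (sub_nonneg.2 hlv)), mul_nonneg h0 (sub_nonneg.2 hlv)]
    constructor <;> nlinarith
  rcases le_total 0 u with h | h
  · exact key u h (by rwa [abs_of_nonneg h] at hu)
  · have := key (-u) (by linarith) (by rwa [abs_of_nonpos h] at hu)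
    simpa [Real.sin_neg] using this

/-! ### The lower bound on the distance from uniform -/

/-- The distance bound for all product distributions, with no condition on `‖ν‖_∞`. -/
lemma dtv_prodMass_ge {n : ℕ} (ν : Fin n → ℝ) (hν : ∀ i, |ν i| ≤ 1) (hν0 : ν ≠ 0) :
    min 1 (Real.sqrt (∑ i, ν i ^ 2)) / 32 ≤ dtv (prodMass ν) (uniform n) := by
  set m := Real.sqrt (∑ i, ν i ^ 2) with hm
  have hsum0 : 0 ≤ ∑ i, ν i ^ 2 := Finset.sum_nonneg fun i _ => sq_nonneg _
  have hmsq : ∑ i, ν i ^ 2 = m ^ 2 := (Real.sq_sqrt hsum0).symm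
  have hle : ∀ i, |ν i| ≤ m := fun i => Real.abs_le_sqrt
    (Finset.single_le_sum (f := fun i => ν i ^ 2) (fun i _ => sq_nonneg _) (Finset.mem_univ i))
  have hmpos : 0 < m := by
    obtain ⟨i, hi⟩ := Function.ne_iff.1 hν0
    exact (abs_pos.2 hi).trans_le (hle i)
  -- The frequency `l` keeps both `l m` (the scale of the angles) and `l m²` (the mean of the
  -- phase under `ν`) at most `1 / 2`, the latter being `min 1 m / 2`.
  obtain ⟨l, hl0, hlm, hlm2, hlmin⟩ : ∃ l : ℝ, 0 ≤ l ∧ l * m ≤ 1 / 2 ∧ l * m ^ 2 ≤ 1 / 2 ∧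
      l * m ^ 2 = min 1 m / 2 := by
    rcases le_total m 1 with h | h
    · have e : 1 / (2 * m) * m = 1 / 2 := by field_simp
      have e2 : 1 / (2 * m) * m ^ 2 = m / 2 := by field_simp
      exact ⟨1 / (2 * m), by positivity, e.le, by linarith, by rw [min_eq_right h, e2]⟩
    · have e : 1 / (2 * m ^ 2) * m = 1 / (2 * m) := by field_simp
      have e2 : 1 / (2 * m ^ 2) * m ^ 2 = 1 / 2 := by field_simp
      refine ⟨1 / (2 * m ^ 2), by positivity, ?_, e2.le, by rw [min_eq_left h, e2]⟩
      rw [e]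
      exact one_div_le_one_div_of_le (by norm_num) (by linarith)
  set a : Fin n → ℝ := fun i => l * ν i with ha
  have hlν : ∀ i, l * |ν i| ≤ 1 / 2 := fun i =>
    (mul_le_mul_of_nonneg_left (hle i) hl0).trans hlm
  have hasq : ∀ i, a i ^ 2 ≤ 1 / 4 := fun i => by
    have : a i ^ 2 = (l * |ν i|) ^ 2 := by rw [mul_pow l |ν i|, sq_abs, ← mul_pow]
    rw [this]
    nlinarith [hlν i, mul_nonneg hl0 (abs_nonneg (ν i))]
  have hsb : ∀ i, l * ν i ^ 2 / 2 ≤ ν i * Real.sin (a i) ∧ ν i * Real.sin (a i) ≤ l * ν i ^ 2 :=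
    fun i => mul_sin_bounds hl0 ((hlν i).trans (by norm_num))
  have hcos : ∀ i, 1 - a i ^ 2 / 2 ≤ Real.cos (a i) := fun i => Real.one_sub_sq_div_two_le_cos
  obtain ⟨-, -, -, him⟩ := im_prod_bounds (fun i => Real.cos (a i))
    (fun i => ν i * Real.sin (a i)) Finset.univ (fun i => by linarith [hcos i, hasq i])
    (fun i => Real.cos_le_one _)
    (fun i => le_trans (by positivity) (hsb i).1)
    (fun i => by
      have h1 : ν i ^ 2 ≤ 1 := (sq_le_one_iff_abs_le_one _).2 (hν i)
      nlinarith [Real.sin_sq_add_cos_sq (a i), sq_nonneg (Real.sin (a i))])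
  have hB : ∑ i, (1 - Real.cos (a i)) ≤ 1 / 8 := by
    calc ∑ i, (1 - Real.cos (a i)) ≤ ∑ i, l ^ 2 / 2 * ν i ^ 2 :=
          Finset.sum_le_sum fun i _ => by
            have := hcos i
            simp only [ha] at this ⊢
            nlinarith
      _ = (l * m) ^ 2 / 2 := by rw [← Finset.mul_sum, hmsq]; ring
      _ ≤ 1 / 8 := by nlinarith [mul_nonneg hl0 hmpos.le]
  have hS1 : ∑ i, ν i * Real.sin (a i) ≤ l * m ^ 2 := by
    rw [← hmsq, Finset.mul_sum]
    exact Finset.sum_le_sum fun i _ => (hsb i).2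
  have hS2 : l * m ^ 2 / 2 ≤ ∑ i, ν i * Real.sin (a i) := by
    rw [← hmsq, Finset.mul_sum, Finset.sum_div]
    exact Finset.sum_le_sum fun i _ => (hsb i).1
  have hU : ∑ x : Cube n, uniform n x * Real.sin (∑ i, a i * bval (x i)) = 0 := by
    rw [← prodMass_zero, sum_prodMass_mul_sin]
    have : ∀ i, (⟨Real.cos (a i), (0 : Fin n → ℝ) i * Real.sin (a i)⟩ : ℂ)
        = ((Real.cos (a i) : ℝ) : ℂ) := fun i => by
      apply Complex.ext <;> simp [Complex.cos_ofReal_re]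
    simp_rw [this]
    rw [← Complex.ofReal_prod, Complex.ofReal_im]
  have hd := sum_sub_le_two_dtv (prodMass ν) (uniform n)
    (fun x => Real.sin (∑ i, a i * bval (x i))) (fun x => Real.abs_sin_le_one _)
  simp only [hU, sum_prodMass_mul_sin, sub_zero] at hd
  have hmin : 0 ≤ min 1 m := le_min zero_le_one hmpos.le
  generalize ∑ i, ν i * Real.sin (a i) = S at *
  generalize ∑ i, (1 - Real.cos (a i)) = B at *
  have hSn : 0 ≤ S := by linarith
  have : S * (1 / 2) ≤ S * (1 - 2 * B - S ^ 2) :=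
    mul_le_mul_of_nonneg_left (by nlinarith) hSn
  linarith

/-- There are constants `c₁*, c₂* > 0` such that every product
distribution `p` on `{-1,1}^n` (with `n ≥ 1`) with `μ(p) ≠ 0` satisfies
`dtv(p,U) ≥ (1/8 − c₁*·‖μ(p)‖_∞/‖μ(p)‖₂) · min(c₂*, ‖μ(p)‖₂/4)`. -/
theorem statement4 :
    ∃ c₁ c₂ : ℝ, 0 < c₁ ∧ 0 < c₂ ∧
      ∀ (n : ℕ), 0 < n → ∀ p : Cube n → ℝ, IsDist p → IsProduct p →
      meanVec p ≠ 0 →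
      (1 / 8 - c₁ * (⨆ i, |meanVec p i|) / Real.sqrt (∑ i, meanVec p i ^ 2)) *
          min c₂ (Real.sqrt (∑ i, meanVec p i ^ 2) / 4) ≤ dtv p (uniform n) := by
  refine ⟨1, 1 / 4, one_pos, by norm_num, ?_⟩
  intro n _ p _ ⟨ν, hν, hp⟩ hne
  obtain rfl : p = prodMass ν := funext hp
  rw [meanVec_prodMass] at hne ⊢
  have h := dtv_prodMass_ge ν hν hne
  have hm : 0 ≤ Real.sqrt (∑ i, ν i ^ 2) := Real.sqrt_nonneg _
  have hsup : 0 ≤ ⨆ i, |ν i| := Real.iSup_nonneg fun i => abs_nonneg _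
  have hq : 0 ≤ 1 * (⨆ i, |ν i|) / Real.sqrt (∑ i, ν i ^ 2) := by positivity
  have hmin : min (1 / 4) (Real.sqrt (∑ i, ν i ^ 2) / 4)
      = min 1 (Real.sqrt (∑ i, ν i ^ 2)) / 4 := by
    rw [min_div_div_right (by norm_num)]
  rw [hmin]
  have hmin0 : 0 ≤ min 1 (Real.sqrt (∑ i, ν i ^ 2)) / 4 :=
    div_nonneg (le_min zero_le_one hm) (by norm_num)
  nlinarith [mul_nonneg hq hmin0]


end JuntaPaper
end

section
/- Let n ∈ ℕ₊, 1 ≤ k ≤ n, and ε ∈ (0, 1/4]. Suppose S ⊆ [n] has size exactly k and J ⊆ [n] has size at most k with J ≠ S. Let p_S be the distribution on {−1,1}^n with p_S(x) = (1+4ε)·2^{−n} if Π_{i∈S} x_i = 1 and p_S(x) = (1−4ε)·2^{−n} otherwise. Then dtv(p_S, g) ≥ 2ε for every junta distribution g over J. -/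
/-!
Since `J.card ≤ S.card` and `J ≠ S`, some coordinate `i` lies in `S` but not in `J`. Flipping
coordinate `i` is an involution of the cube that leaves `g` unchanged and negates the parity on
`S`, so it exchanges the two values of `pParity S ε`, which differ by `8 * ε * 2⁻¹ ^ n`.
By the triangle inequality each pair `x`, `flipAt i x` then contributes at least this difference
to the `L¹` distance of `pParity S ε` and `g` (`pair_bound`). Summing over all `x` counts every
point twice, so the `L¹` distance is at least `4 * ε`.
-/

open Finset

namespace JuntaPaper

/-- The hard distribution `p_S`: it puts mass `(1+4ε)2^{-n}` on points whose parity on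
`S` is `1`, and `(1-4ε)2^{-n}` on the other points. -/
noncomputable def pParity {n : ℕ} (S : Finset (Fin n)) (ε : ℝ) : Cube n → ℝ :=
  fun x => if (∏ i ∈ S, bval (x i)) = 1 then (1 + 4 * ε) * (2 : ℝ)⁻¹ ^ n
           else (1 - 4 * ε) * (2 : ℝ)⁻¹ ^ n

/-- The point obtained from `x` by negating coordinate `i`. -/
def flipAt {n : ℕ} (i : Fin n) (x : Cube n) : Cube n :=
  Function.update x i (!x i)

lemma flipAt_involutive {n : ℕ} (i : Fin n) : Function.Involutive (flipAt i) := by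
  intro x
  simp [flipAt]

lemma parity_flipAt {n : ℕ} {S : Finset (Fin n)} {i : Fin n} (hi : i ∈ S) (x : Cube n) :
    ∏ j ∈ S, bval (flipAt i x j) = -∏ j ∈ S, bval (x j) := by
  rw [← Finset.mul_prod_erase S _ hi, ← Finset.mul_prod_erase S (fun j => bval (x j)) hi]
  have h : ∏ j ∈ S.erase i, bval (flipAt i x j) = ∏ j ∈ S.erase i, bval (x j) :=
    Finset.prod_congr rfl fun j hj => by
      simp [flipAt, Function.update_of_ne (Finset.ne_of_mem_erase hj)]
  rw [h]
  simp [flipAt, bval_not]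

lemma parity_eq_one_or {n : ℕ} (S : Finset (Fin n)) (x : Cube n) :
    ∏ j ∈ S, bval (x j) = 1 ∨ ∏ j ∈ S, bval (x j) = -1 := by
  refine Finset.prod_induction _ (fun r : ℝ => r = 1 ∨ r = -1) ?_ (Or.inl rfl) ?_
  · rintro a b (rfl | rfl) (rfl | rfl) <;> norm_num
  · intro j _
    cases x j <;> simp [bval]

lemma pParity_eq {n : ℕ} (S : Finset (Fin n)) (ε : ℝ) (x : Cube n) :
    pParity S ε x = (1 + 4 * ε * ∏ j ∈ S, bval (x j)) * (2 : ℝ)⁻¹ ^ n := by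
  unfold pParity
  rcases parity_eq_one_or S x with h | h
  · rw [if_pos h, h]; ring
  · rw [if_neg (by rw [h]; norm_num), h]; ring

/-- Each flipped pair contributes at least the gap between the two values of `pParity S ε`. -/
lemma pair_bound {n : ℕ} {S J : Finset (Fin n)} {i : Fin n} (hiS : i ∈ S) (hiJ : i ∉ J)
    (ε : ℝ) {g : Cube n → ℝ} (hgJ : JuntaOn J g) (x : Cube n) :
    8 * ε * (2 : ℝ)⁻¹ ^ n ≤
      |pParity S ε x - g x| + |pParity S ε (flipAt i x) - g (flipAt i x)| := by
  have hg : g (flipAt i x) = g x := hgJ _ _ fun j hj =>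
    Function.update_of_ne (ne_of_mem_of_not_mem hj hiJ) _ _
  rw [hg, pParity_eq, pParity_eq, parity_flipAt hiS]
  set c : ℝ := (2 : ℝ)⁻¹ ^ n
  rcases parity_eq_one_or S x with h | h <;> rw [h]
  · have h1 := le_abs_self ((1 + 4 * ε * 1) * c - g x)
    have h2 := neg_abs_le ((1 + 4 * ε * -1) * c - g x)
    linarith
  · have h1 := neg_abs_le ((1 + 4 * ε * -1) * c - g x)
    have h2 := le_abs_self ((1 + 4 * ε * - -1) * c - g x)
    linarith

/-- Let `n ≥ 1`, `1 ≤ k ≤ n`, `ε ∈ (0,1/4]`, `S ⊆ [n]` of size exactly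
`k`, and `J ⊆ [n]` of size at most `k` with `J ≠ S`.  Then `dtv(p_S, g) ≥ 2ε` for every
junta distribution `g` over `J`. -/
theorem statement5 (n k : ℕ) (hn : 0 < n) (hk1 : 1 ≤ k) (hkn : k ≤ n)
    (ε : ℝ) (hε0 : 0 < ε) (hε : ε ≤ 1 / 4)
    (S J : Finset (Fin n)) (hS : S.card = k) (hJ : J.card ≤ k) (hne : J ≠ S)
    (g : Cube n → ℝ) (hg : IsDist g) (hgJ : JuntaOn J g) :
    2 * ε ≤ dtv (pParity S ε) g := by
  obtain ⟨i, hiS, hiJ⟩ : ∃ i ∈ S, i ∉ J := by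
    by_contra! h
    exact hne (Finset.eq_of_subset_of_card_le h (hJ.trans hS.ge)).symm
  have hsum : ∑ _x : Cube n, 8 * ε * (2 : ℝ)⁻¹ ^ n ≤ ∑ x : Cube n,
      (|pParity S ε x - g x| + |pParity S ε (flipAt i x) - g (flipAt i x)|) :=
    Finset.sum_le_sum fun x _ => pair_bound hiS hiJ ε hgJ x
  have hflip : ∑ x : Cube n, |pParity S ε (flipAt i x) - g (flipAt i x)| =
      ∑ x : Cube n, |pParity S ε x - g x| :=
    Equiv.sum_comp (flipAt_involutive i).toPerm fun x => |pParity S ε x - g x|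
  have hconst : ∑ _x : Cube n, 8 * ε * (2 : ℝ)⁻¹ ^ n = 8 * ε := by
    simp
    field_simp
  rw [Finset.sum_add_distrib, hflip, hconst] at hsum
  unfold dtv
  linarith

end JuntaPaper
end

section
/- Let k, n ∈ ℕ₊ with k ≤ n and ε ∈ (0, 1/120]. Let f : {−1,1}^k → {−1,1} be such that I = |{u ∈ {−1,1}^k : f(u) = 1}| satisfies 2^k/3 ≤ I ≤ 2^{k+1}/3. Let p_f be the distribution on {−1,1}^n with p_f(x) = 2^{−n}·(1 + 40ε·2^k/I) if f(x_1,…,x_k) = 1 and p_f(x) = 2^{−n}·(1 − 40ε·2^k/(2^k − I)) if f(x_1,…,x_k) = −1. Then every distribution p̂ on {−1,1}^n with dtv(p_f, p̂) ≤ ε satisfies Pr_{x∼Uniform({−1,1}^n)}[ sign(p̂(x) − 2^{−n}) ≠ sign(p_f(x) − 2^{−n}) ] ≤ 1/20. -/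
/-! The density `pf` stays at distance at least `40 ε 2⁻ⁿ` from the uniform value `2⁻ⁿ`, because
both `2^k / I` and `2^k / (2^k - I)` are at least `1`. A point `x` at which the signs disagree has
`2⁻ⁿ` weakly between `pf x` and `phat x`, so it contributes at least `40 ε 2⁻ⁿ` to the `ℓ¹`
distance between `pf` and `phat`, which is at most `2 ε`. Hence there are at most `2ⁿ / 20` such
points. -/

open Finset

namespace JuntaPaper

/-- If `a - c` and `b - c` have different signs, then `c` lies weakly between `a` and `b`, so `b` is
at least as far from `a` as from `c`. -/
theorem abs_sub_le_of_sign_ne {a b c : ℝ} (h : Real.sign (a - c) ≠ Real.sign (b - c)) :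
    |b - c| ≤ |b - a| := by
  rcases lt_trichotomy (b - c) 0 with hb | hb | hb
  · have ha : 0 ≤ a - c := by
      by_contra! ha
      exact h (by rw [Real.sign_of_neg ha, Real.sign_of_neg hb])
    rw [abs_of_neg hb, abs_of_neg (by linarith)]
    linarith
  · simp [hb]
  · have ha : a - c ≤ 0 := by
      by_contra! ha
      exact h (by rw [Real.sign_of_pos ha, Real.sign_of_pos hb])
    rw [abs_of_pos hb, abs_of_pos (by linarith)]
    linarith

/-- Let `k ≤ n`, `ε ∈ (0,1/120]`, and let `f : {-1,1}^k → {-1,1}` be a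
Boolean function (encoded with `true ↦ 1`) whose number `I` of `1`-entries satisfies
`2^k/3 ≤ I ≤ 2^{k+1}/3`.  Let `p_f` be the distribution on `{-1,1}^n` with
`p_f(x) = 2^{-n}(1 + 40ε·2^k/I)` when `f(x_1,…,x_k) = 1` and
`p_f(x) = 2^{-n}(1 − 40ε·2^k/(2^k − I))` otherwise.  Then every distribution `p̂` with
`dtv(p_f, p̂) ≤ ε` satisfies
`Pr_{x∼U}[sign(p̂(x) − 2^{-n}) ≠ sign(p_f(x) − 2^{-n})] ≤ 1/20`. -/
theorem statement7 (k n : ℕ) (hk : 0 < k) (hkn : k ≤ n)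
    (ε : ℝ) (hε0 : 0 < ε) (hε : ε ≤ 1 / 120)
    (f : Cube k → Bool) (I : ℕ)
    (hIdef : I = (Finset.univ.filter (fun u : Cube k => f u = true)).card)
    (hI1 : (2 ^ k : ℝ) / 3 ≤ (I : ℝ)) (hI2 : (I : ℝ) ≤ 2 ^ (k + 1) / 3)
    (pf : Cube n → ℝ)
    (hpf : ∀ x : Cube n, pf x =
      if f (fun j : Fin k => x (Fin.castLE hkn j)) = true then
        (2 : ℝ)⁻¹ ^ n * (1 + 40 * ε * 2 ^ k / (I : ℝ))
      else
        (2 : ℝ)⁻¹ ^ n * (1 - 40 * ε * 2 ^ k / ((2 : ℝ) ^ k - (I : ℝ))))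
    (phat : Cube n → ℝ) (hphat : IsDist phat) (hclose : dtv pf phat ≤ ε) :
    (Nat.card {x : Cube n //
        Real.sign (phat x - (2 : ℝ)⁻¹ ^ n) ≠ Real.sign (pf x - (2 : ℝ)⁻¹ ^ n)} : ℝ)
      / 2 ^ n ≤ 1 / 20 := by
  classical
  have hK : (0 : ℝ) < 2 ^ k := by positivity
  have hN : (0 : ℝ) < (2 : ℝ)⁻¹ ^ n := by positivity
  rw [pow_succ] at hI2
  have hIpos : (0 : ℝ) < I := by linarith
  have hJpos : (0 : ℝ) < 2 ^ k - (I : ℝ) := by linarith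
  have hgap : ∀ x, (2 : ℝ)⁻¹ ^ n * (40 * ε) ≤ |pf x - (2 : ℝ)⁻¹ ^ n| := by
    intro x
    have key : ∀ d : ℝ, 0 < d → d ≤ 2 ^ k → 40 * ε ≤ 40 * ε * 2 ^ k / d := by
      intro d hd hdk
      rw [le_div_iff₀ hd]
      gcongr
    rw [hpf x]
    split_ifs
    · refine le_trans ?_ (le_abs_self _)
      have := mul_le_mul_of_nonneg_left (key I hIpos (by linarith)) hN.le
      linarith
    · refine le_trans ?_ (neg_le_abs _)
      have := mul_le_mul_of_nonneg_left (key (2 ^ k - I) hJpos (by linarith)) hN.le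
      linarith
  rw [Nat.card_eq_fintype_card, Fintype.card_subtype]
  set B := Finset.univ.filter (fun x : Cube n =>
    Real.sign (phat x - (2 : ℝ)⁻¹ ^ n) ≠ Real.sign (pf x - (2 : ℝ)⁻¹ ^ n)) with hB
  have hsum : (B.card : ℝ) * ((2 : ℝ)⁻¹ ^ n * (40 * ε)) ≤ ∑ x, |pf x - phat x| := by
    calc (B.card : ℝ) * ((2 : ℝ)⁻¹ ^ n * (40 * ε))
        = ∑ _x ∈ B, (2 : ℝ)⁻¹ ^ n * (40 * ε) := by rw [Finset.sum_const, nsmul_eq_mul]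
      _ ≤ ∑ x ∈ B, |pf x - phat x| := by
          refine Finset.sum_le_sum fun x hx => ?_
          exact (hgap x).trans (abs_sub_le_of_sign_ne (Finset.mem_filter.1 hx).2)
      _ ≤ ∑ x, |pf x - phat x| :=
          Finset.sum_le_sum_of_subset_of_nonneg (Finset.subset_univ _)
            fun _ _ _ => abs_nonneg _
  unfold dtv at hclose
  have hfin : ((B.card : ℝ) * (2 : ℝ)⁻¹ ^ n) * (40 * ε) ≤ (1 / 20) * (40 * ε) := by linarith
  have := le_of_mul_le_mul_right hfin (by positivity)
  rwa [inv_pow, ← div_eq_mul_inv] at this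

end JuntaPaper
end

section
/- There is an absolute constant C* > 0 such that for every ℓ ∈ ℕ₊, the unique solution z ∈ ℝ^ℓ of the Vandermonde system A(α) z = e₁ with nodes α_j = j³ satisfies ‖z‖₁ = Σ_{j=1}^ℓ |z_j| ≤ C*. -/
/-!
Testing the system against the polynomial `∏_{k ≠ j} (X - α_k)`, of degree `ℓ - 1`, gives
`|z_j| ∏_{k ≠ j} |α_j - α_k| = ∏_{k ≠ j} α_k` (`abs_mul_prod_eq`), so only a lower bound on the
product of differences of cubes is needed. Factor `|k³ - j³| = |k - j| (k² + kj + j²)`, and bound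
`k² + kj + j²` below by `k (k + j)` for `k > j` and by `(3/2) k (k + j)` for `k < j`. The factors
`|k - j| (k + j)` contribute a quotient of factorials,
`∏_{k ≠ j} k² / |k² - j²| = 2 (ℓ!)² / ((ℓ - j)! (ℓ + j)!) ≤ 2`, because the central binomial
coefficient is the largest, and the `j - 1` factors `3/2` give `|z_j| ≤ 2 (2/3)^(j-1)`
(`prod_cubes_le`). Summing the geometric series yields the bound `6`.
-/

open Finset

/-- The `ℓ×ℓ` Vandermonde matrix with nodes `α_j = j³` (`j = 1,…,ℓ`):
entry `(k,j)` is `α_j^{k-1}`, i.e. `A k j = ((j+1)³)^k` in `0`-based indexing. -/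
noncomputable def vandermondeCubes (ℓ : ℕ) : Matrix (Fin ℓ) (Fin ℓ) ℝ :=
  fun k j => ((((j : ℕ) + 1 : ℕ) : ℝ) ^ 3) ^ (k : ℕ)

/-- Since `z` represents evaluation at `0` on polynomials of degree `< ℓ`, applying it to
`∏_{k ≠ j} (X - α_k)` isolates `z_j`. -/
lemma abs_mul_prod_eq {ℓ : ℕ} {z : Fin ℓ → ℝ}
    (hz : (vandermondeCubes ℓ).mulVec z = fun k : Fin ℓ => if (k : ℕ) = 0 then (1 : ℝ) else 0)
    (j : Fin ℓ) :
    |z j| * ∏ k ∈ (range ℓ).erase j, |((j : ℕ) + 1 : ℝ) ^ 3 - ((k : ℝ) + 1) ^ 3|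
      = ∏ k ∈ (range ℓ).erase j, ((k : ℝ) + 1) ^ 3 := by
  have hℓ : 0 < ℓ := j.pos
  set p : Polynomial ℝ :=
    ∏ k ∈ (range ℓ).erase j, (Polynomial.X - Polynomial.C (((k : ℝ) + 1) ^ 3)) with hp
  have hdeg : p.natDegree < ℓ := by
    rw [hp, Polynomial.natDegree_finsetProd_X_sub_C_eq_card, card_erase_of_mem (by simp), card_range]
    omega
  have heval : ∀ x : ℝ, p.eval x = ∏ k ∈ (range ℓ).erase j, (x - ((k : ℝ) + 1) ^ 3) := by
    intro x
    simp [hp, Polynomial.eval_prod]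
  have hmoment : ∀ k : Fin ℓ, ∑ i : Fin ℓ, (((i : ℕ) + 1 : ℝ) ^ 3) ^ (k : ℕ) * z i
      = if (k : ℕ) = 0 then (1 : ℝ) else 0 := by
    intro k
    have := congrFun hz k
    simpa [Matrix.mulVec, dotProduct, vandermondeCubes] using this
  have hsum : ∑ i : Fin ℓ, z i * p.eval (((i : ℕ) + 1 : ℝ) ^ 3) = p.eval 0 := by
    calc ∑ i : Fin ℓ, z i * p.eval (((i : ℕ) + 1 : ℝ) ^ 3)
        = ∑ i : Fin ℓ, ∑ k : Fin ℓ,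
            p.coeff k * ((((i : ℕ) + 1 : ℝ) ^ 3) ^ (k : ℕ) * z i) := by
          refine sum_congr rfl fun i _ => ?_
          rw [Polynomial.eval_eq_sum_range' hdeg, ← Fin.sum_univ_eq_sum_range
            (fun k => p.coeff k * (((i : ℕ) + 1 : ℝ) ^ 3) ^ k), mul_sum]
          exact sum_congr rfl fun k _ => by ring
      _ = ∑ k : Fin ℓ, p.coeff k * if (k : ℕ) = 0 then (1 : ℝ) else 0 := by
          rw [sum_comm]
          exact sum_congr rfl fun k _ => by rw [← mul_sum, hmoment]
      _ = p.eval 0 := by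
          rw [Fin.sum_univ_eq_sum_range (fun k => p.coeff k * if k = 0 then (1 : ℝ) else 0)]
          simp [hℓ, Polynomial.coeff_zero_eq_eval_zero]
  have hsingle : ∑ i : Fin ℓ, z i * p.eval (((i : ℕ) + 1 : ℝ) ^ 3)
      = z j * p.eval (((j : ℕ) + 1 : ℝ) ^ 3) := by
    refine sum_eq_single j (fun i _ hij => ?_) (by simp)
    rw [heval, prod_eq_zero (i := (i : ℕ)), mul_zero]
    · simp [Fin.val_ne_of_ne hij]
    · ring
  rw [hsingle, heval, heval] at hsum
  have := congrArg abs hsum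
  rw [abs_mul, abs_prod, abs_prod] at this
  rw [this]
  refine prod_congr rfl fun k _ => ?_
  rw [zero_sub, abs_neg, abs_of_nonneg (by positivity)]

lemma prod_range_erase (f : ℕ → ℝ) (n d : ℕ) :
    ∏ k ∈ (range (n + 1 + d)).erase n, f k
      = (∏ k ∈ range n, f k) * ∏ i ∈ range d, f (n + 1 + i) := by
  have h : (range (n + 1 + d)).erase n
      = (range n).disjUnion ((range d).map (addLeftEmbedding (n + 1)))
          (by simp only [disjoint_left, mem_range, mem_map, addLeftEmbedding_apply]
              rintro a ha ⟨b, -, rfl⟩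
              omega) := by
    ext a
    simp only [mem_erase, mem_range, mem_disjUnion, mem_map, addLeftEmbedding_apply]
    refine ⟨fun ha => ?_, ?_⟩
    · by_cases hn : a < n
      · exact Or.inl hn
      · exact Or.inr ⟨a - (n + 1), by omega, by omega⟩
    · rintro (ha | ⟨b, hb, rfl⟩) <;> omega
  rw [h, prod_disjUnion, prod_map]
  simp

lemma factorial_mul_prod (m d : ℕ) :
    (m.factorial : ℝ) * ∏ i ∈ range d, ((m : ℝ) + i + 1) = ((m + d).factorial : ℝ) := by
  induction d with
  | zero => simp
  | succ d ih =>
    rw [prod_range_succ, ← mul_assoc, ih, ← add_assoc, Nat.factorial_succ]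
    push_cast
    ring

lemma prod_add_one (d : ℕ) : ∏ i ∈ range d, ((i : ℝ) + 1) = (d.factorial : ℝ) := by
  simpa using factorial_mul_prod 0 d

lemma prod_sub (n : ℕ) : ∏ k ∈ range n, ((n : ℝ) - k) = (n.factorial : ℝ) := by
  rw [← prod_add_one, ← prod_range_reflect]
  refine prod_congr rfl fun k hk => ?_
  have hk' : k + 1 ≤ n := mem_range.1 hk
  rw [Nat.sub_sub, Nat.cast_sub (by omega)]
  push_cast
  ring

lemma factorial_sq_le (m d : ℕ) :
    (((m + d).factorial : ℝ)) ^ 2 ≤ (d.factorial : ℝ) * ((2 * m + d).factorial : ℝ) := by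
  have h1 := Nat.choose_le_centralBinom d (m + d)
  have h2 := Nat.choose_mul_factorial_mul_factorial (n := 2 * (m + d)) (k := d) (by omega)
  have h3 := Nat.choose_mul_factorial_mul_factorial (n := 2 * (m + d)) (k := m + d) (by omega)
  rw [show 2 * (m + d) - d = 2 * m + d by omega] at h2
  rw [show 2 * (m + d) - (m + d) = m + d by omega] at h3
  rw [Nat.centralBinom_eq_two_mul_choose] at h1
  have hpos : 0 < (2 * (m + d)).choose (m + d) := Nat.choose_pos (by omega)
  have : (m + d).factorial ^ 2 ≤ d.factorial * (2 * m + d).factorial := by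
    refine Nat.le_of_mul_le_mul_left ?_ hpos
    calc (2 * (m + d)).choose (m + d) * (m + d).factorial ^ 2
        = (2 * (m + d)).choose d * d.factorial * (2 * m + d).factorial := by
          rw [h2, ← h3]; ring
      _ ≤ (2 * (m + d)).choose (m + d) * (d.factorial * (2 * m + d).factorial) := by
          rw [mul_assoc]; exact Nat.mul_le_mul_right _ h1
  exact_mod_cast this

/-- The nodes below the `(n+1)`-st one, each contributing a gain of `3/2`. -/
lemma prod_lower_le (n : ℕ) :
    (3 / 2 : ℝ) ^ n * ((n.factorial : ℝ) * n.factorial * ∏ k ∈ range n, ((n : ℝ) + 1 + k + 1))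
      ≤ ∏ k ∈ range n, |((n : ℝ) + 1) ^ 3 - ((k : ℝ) + 1) ^ 3| := by
  have h : (3 / 2 : ℝ) ^ n = ∏ _k ∈ range n, (3 / 2 : ℝ) := by rw [prod_const, card_range]
  nth_rewrite 1 [← prod_sub n]
  rw [← prod_add_one n, h, ← prod_mul_distrib, ← prod_mul_distrib, ← prod_mul_distrib]
  refine prod_le_prod (fun k hk => ?_) fun k hk => ?_
  all_goals
    have hk' : (k : ℝ) + 1 ≤ n := by exact_mod_cast mem_range.1 hk
    have hd : (0 : ℝ) ≤ n - k := by linarith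
  · positivity
  · refine le_trans ?_ (le_abs_self _)
    have hk0 : (0 : ℝ) ≤ k := k.cast_nonneg
    -- With `J = n + 1` and `K = k + 1 < J`, this is `(3/2) K (J + K) ≤ J² + JK + K²`.
    have key : 3 / 2 * (((k : ℝ) + 1) * ((n : ℝ) + 1 + k + 1))
        ≤ ((n : ℝ) + 1) ^ 2 + (n + 1) * (k + 1) + ((k : ℝ) + 1) ^ 2 := by
      nlinarith [mul_nonneg hd hd, mul_nonneg hd hk0]
    have := mul_le_mul_of_nonneg_left key hd
    linarith

/-- The nodes above the `(n+1)`-st one. -/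
lemma prod_upper_le (n d : ℕ) :
    (d.factorial : ℝ) * (∏ i ∈ range d, (((n + 1 : ℕ) : ℝ) + i + 1))
        * (∏ i ∈ range d, (((2 * (n + 1) : ℕ) : ℝ) + i + 1))
      ≤ ∏ i ∈ range d, |((n : ℝ) + 1) ^ 3 - (((n + 1 + i : ℕ) : ℝ) + 1) ^ 3| := by
  rw [← prod_add_one d, ← prod_mul_distrib, ← prod_mul_distrib]
  refine prod_le_prod (fun i _ => by positivity) fun i _ => ?_
  refine le_trans ?_ (neg_le_abs _)
  push_cast
  have h : (0 : ℝ) ≤ ((i : ℝ) + 1) * ((n : ℝ) + 1) ^ 2 := by positivity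
  linarith

/-- The product formula for `z_{n+1}` decays like `(2/3)^n`, uniformly in the number
`n + 1 + d` of nodes. -/
lemma prod_cubes_le (n d : ℕ) :
    ∏ k ∈ (range (n + 1 + d)).erase n, ((k : ℝ) + 1) ^ 3
      ≤ 2 * (2 / 3 : ℝ) ^ n
        * ∏ k ∈ (range (n + 1 + d)).erase n, |((n : ℝ) + 1) ^ 3 - ((k : ℝ) + 1) ^ 3| := by
  rw [prod_range_erase, prod_range_erase, prod_pow, prod_pow, prod_add_one]
  have hcast : ∏ i ∈ range d, (((n + 1 + i : ℕ) : ℝ) + 1)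
      = ∏ i ∈ range d, (((n + 1 : ℕ) : ℝ) + i + 1) := by
    refine prod_congr rfl fun i _ => by push_cast; ring
  rw [hcast]
  have hA := prod_lower_le n
  have hB := prod_upper_le n d
  have hP := factorial_mul_prod (n + 1) n
  have hQ := factorial_mul_prod (n + 1) d
  have hR := factorial_mul_prod (2 * (n + 1)) d
  have hS := factorial_sq_le (n + 1) d
  have hT : ((2 * (n + 1)).factorial : ℝ) = 2 * (n + 1) * ((n + 1 + n).factorial : ℝ) := by
    rw [show 2 * (n + 1) = (n + 1 + n) + 1 by ring, Nat.factorial_succ]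
    push_cast
    ring
  have hJ : ((n + 1).factorial : ℝ) = (n + 1) * (n.factorial : ℝ) := by
    rw [Nat.factorial_succ]; push_cast; ring
  have hPc : ∏ k ∈ range n, ((n : ℝ) + 1 + k + 1)
      = ∏ k ∈ range n, (((n + 1 : ℕ) : ℝ) + k + 1) := by push_cast; rfl
  rw [hPc] at hA
  have hP0 : 0 < ∏ k ∈ range n, (((n + 1 : ℕ) : ℝ) + k + 1) := prod_pos fun _ _ => by positivity
  have hQ0 : 0 < ∏ i ∈ range d, (((n + 1 : ℕ) : ℝ) + i + 1) := prod_pos fun _ _ => by positivity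
  have hR0 : 0 < ∏ i ∈ range d, (((2 * (n + 1) : ℕ) : ℝ) + i + 1) :=
    prod_pos fun _ _ => by positivity
  set P := ∏ k ∈ range n, (((n + 1 : ℕ) : ℝ) + k + 1)
  set Q := ∏ i ∈ range d, (((n + 1 : ℕ) : ℝ) + i + 1)
  set R := ∏ i ∈ range d, (((2 * (n + 1) : ℕ) : ℝ) + i + 1)
  have hF : (0 : ℝ) < n.factorial := by exact_mod_cast n.factorial_pos
  have hG : (0 : ℝ) < d.factorial := by exact_mod_cast d.factorial_pos
  -- In these letters `factorial_sq_le` reads `(J! Q)² ≤ d! · 2J · J! P · R` with `J = n + 1`.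
  have hmain : (n.factorial : ℝ) * Q ^ 2 ≤ 2 * (d.factorial : ℝ) * P * R := by
    rw [← hQ, ← hR, hT, ← hP, hJ] at hS
    have hc : (0 : ℝ) < (n + 1) ^ 2 * n.factorial := by positivity
    refine le_of_mul_le_mul_left ?_ hc
    linarith
  have hgeom : (2 / 3 : ℝ) ^ n * (3 / 2 : ℝ) ^ n = 1 := by
    rw [← mul_pow]; norm_num
  calc (n.factorial : ℝ) ^ 3 * Q ^ 3
      = ((n.factorial : ℝ) ^ 2 * Q) * (n.factorial * Q ^ 2) := by ring
    _ ≤ ((n.factorial : ℝ) ^ 2 * Q) * (2 * (d.factorial : ℝ) * P * R) := by gcongr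
    _ = 2 * ((2 / 3 : ℝ) ^ n * (3 / 2 : ℝ) ^ n)
          * (((n.factorial : ℝ) * n.factorial * P) * (d.factorial * Q * R)) := by
        rw [hgeom]; ring
    _ = 2 * (2 / 3 : ℝ) ^ n
          * (((3 / 2 : ℝ) ^ n * ((n.factorial : ℝ) * n.factorial * P)) * (d.factorial * Q * R)) := by
        ring
    _ ≤ _ := by gcongr

/-- There is an absolute constant `C* > 0` such that for every `ℓ ≥ 1`,
the (unique) solution `z ∈ ℝ^ℓ` of the Vandermonde system `A(α) z = e₁` with nodes
`α_j = j³` satisfies `‖z‖₁ ≤ C*`. -/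
theorem statement8 :
    ∃ C : ℝ, 0 < C ∧ ∀ (ℓ : ℕ), 0 < ℓ → ∀ z : Fin ℓ → ℝ,
      (vandermondeCubes ℓ).mulVec z = (fun k : Fin ℓ => if (k : ℕ) = 0 then (1 : ℝ) else 0) →
      ∑ j, |z j| ≤ C := by
  refine ⟨6, by norm_num, fun ℓ _ z hz => ?_⟩
  have hbound : ∀ j : Fin ℓ, |z j| ≤ 2 * (2 / 3 : ℝ) ^ (j : ℕ) := by
    intro j
    have hpos : 0 < ∏ k ∈ (range ℓ).erase j, |((j : ℕ) + 1 : ℝ) ^ 3 - ((k : ℝ) + 1) ^ 3| := by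
      refine prod_pos fun k hk => abs_pos.2 (sub_ne_zero.2 fun h => (mem_erase.1 hk).1 ?_)
      have := (pow_left_inj₀ (by positivity) (by positivity) three_ne_zero).1 h
      exact_mod_cast (add_right_cancel this).symm
    refine le_of_mul_le_mul_right ?_ hpos
    rw [abs_mul_prod_eq hz j]
    obtain ⟨d, hd⟩ := Nat.exists_eq_add_of_le (Nat.succ_le_of_lt j.isLt)
    have := prod_cubes_le j d
    rwa [← Nat.succ_eq_add_one, ← hd] at this
  calc ∑ j, |z j| ≤ ∑ j : Fin ℓ, 2 * (2 / 3 : ℝ) ^ (j : ℕ) := sum_le_sum fun j _ => hbound j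
    _ = 2 * ∑ j ∈ range ℓ, (2 / 3 : ℝ) ^ j := by
        rw [Fin.sum_univ_eq_sum_range (fun j => 2 * (2 / 3 : ℝ) ^ j), mul_sum]
    _ ≤ 6 := by
        rw [geom_sum_eq (by norm_num), show (2 / 3 - 1 : ℝ) = -(1 / 3) by norm_num]
        have : (0 : ℝ) ≤ (2 / 3) ^ ℓ := by positivity
        ring_nf at this ⊢
        linarith
end

section
/- There is an absolute constant i₀ ∈ ℕ such that for every ℓ ∈ ℕ₊ and every index i with i₀ ≤ i ≤ ℓ − 1, the unique solution z ∈ ℝ^ℓ of the Vandermonde system A(α) z = e₁ with nodes α_j = j³ satisfies |z_{i+1}| ≤ e^{−1/20} · |z_i|. -/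
/-!
Write `α k = (k+1)³`. The system says that `∑ k, z k * p (α k) = p 0` for every polynomial `p` of
degree `< ℓ` (`sum_mul_eval`). For consecutive indices `i`, `j = i + 1`, take
`p = X * ∏ (X - α k)` over `k ≠ i, j`: only two terms survive, and
`|α i| * ∏ |α i - α k| * |z i| = |α j| * ∏ |α j - α k| * |z j|`.

With `a = i + 1`, `K = k + 1` and `s = a / 2 + 1`, the elementary inequality
`(K² + aK + a²) / (K² + (a+1)K + (a+1)²) ≤ (K + s - 1) / (K + s)` (`quad_le`) makes the ratio of the
two products telescope, on each side of `{i, j}` separately. The outcome is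
`|z j| / |z i| ≤ a (a+2) (3a+4) / (6 (a+1)³) ≤ 19/20 ≤ exp (-1/20)`, so `i₀ = 0`
works.
-/

open Finset

/-- The nodes, indexed from `0`: `cubeNode k = (k+1)³`. -/
noncomputable def cubeNode (k : ℕ) : ℝ := ((k : ℝ) + 1) ^ 3

lemma sum_mul_eval {ℓ : ℕ} (hℓ : 0 < ℓ) (z : Fin ℓ → ℝ)
    (h : (vandermondeCubes ℓ).mulVec z = (fun k : Fin ℓ => if (k : ℕ) = 0 then (1 : ℝ) else 0))
    (p : Polynomial ℝ) (hp : p.natDegree < ℓ) :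
    ∑ k : Fin ℓ, z k * p.eval (cubeNode k) = p.eval 0 := by
  have hrow : ∀ n : Fin ℓ, ∑ k : Fin ℓ, cubeNode k ^ (n : ℕ) * z k
      = if (n : ℕ) = 0 then (1 : ℝ) else 0 := by
    intro n
    have := congrFun h n
    simpa [Matrix.mulVec, dotProduct, vandermondeCubes, cubeNode] using this
  calc ∑ k : Fin ℓ, z k * p.eval (cubeNode k)
      = ∑ k : Fin ℓ, ∑ n : Fin ℓ, p.coeff n * (cubeNode k ^ (n : ℕ) * z k) := by
        refine Finset.sum_congr rfl fun k _ => ?_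
        rw [Polynomial.eval_eq_sum_range' hp, ← Fin.sum_univ_eq_sum_range
          (fun n => p.coeff n * cubeNode k ^ n), Finset.mul_sum]
        exact Finset.sum_congr rfl fun n _ => by ring
    _ = ∑ n : Fin ℓ, p.coeff n * (if (n : ℕ) = 0 then (1 : ℝ) else 0) := by
        rw [Finset.sum_comm]
        refine Finset.sum_congr rfl fun n _ => ?_
        rw [← Finset.mul_sum, hrow]
    _ = p.eval 0 := by
        rw [← Polynomial.coeff_zero_eq_eval_zero, Finset.sum_eq_single (⟨0, hℓ⟩ : Fin ℓ)]
        · simp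
        · intro n _ hn
          have : (n : ℕ) ≠ 0 := fun h0 => hn (Fin.ext h0)
          simp [this]
        · simp

/-- A telescoping comparison of products; no sign condition on `g` is required. -/
lemma telescoping (g u v : ℕ → ℝ) (n : ℕ) (hu : ∀ k, 0 ≤ u k) (hv : ∀ k, 0 ≤ v k)
    (h : ∀ k < n, g k * u k ≤ g (k + 1) * v k) :
    g 0 * ∏ k ∈ range n, u k ≤ g n * ∏ k ∈ range n, v k := by
  induction n with
  | zero => simp
  | succ n ih =>
    rw [Finset.prod_range_succ, Finset.prod_range_succ]
    have h1 := mul_le_mul_of_nonneg_right (ih fun k hk => h k (by omega)) (hu n)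
    have h2 := mul_le_mul_of_nonneg_left (h n (by omega))
      (Finset.prod_nonneg fun k (_ : k ∈ range n) => hv k)
    linarith

/-- The shift `s = a / 2 + 1` is a simple choice with `(2a + 1) s ≥ (a + 1)²`, which is what makes
`1 / (K + s)` a lower bound for `(K + 2a + 1) / (K² + (a+1) K + (a+1)²)`, the relative decrease from
one quadratic to the other. -/
lemma quad_le {a K : ℝ} (ha : 0 < a) (hK : 0 < K) :
    (K ^ 2 + a * K + a ^ 2) / (K - 1 + (a / 2 + 1))
      ≤ (K ^ 2 + (a + 1) * K + (a + 1) ^ 2) / (K + (a / 2 + 1)) := by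
  rw [div_le_div_iff₀ (by linarith) (by linarith)]
  nlinarith [mul_pos ha hK]

/-- Nodes below `i`: the factors `(a - K) / (a + 1 - K)` and `quad_le` both telescope. -/
lemma prod_below (i : ℕ) {a : ℝ} (ha : a = i + 1) :
    a / (a / 2 + 1) * ∏ k ∈ range i, |cubeNode i - cubeNode k|
      ≤ 1 / (a - 1 + (a / 2 + 1)) * ∏ k ∈ range i, |cubeNode (i + 1) - cubeNode k| := by
  have key := telescoping (fun k => (a - k) / (k + (a / 2 + 1)))
    (fun k => |cubeNode i - cubeNode k|) (fun k => |cubeNode (i + 1) - cubeNode k|) i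
    (fun _ => abs_nonneg _) (fun _ => abs_nonneg _) ?_
  · have hi : (i : ℝ) = a - 1 := by linarith
    simpa [hi] using key
  · intro k hk
    have hk' : (k : ℝ) + 1 ≤ i := by exact_mod_cast hk
    have hk0 : (0 : ℝ) ≤ k := k.cast_nonneg
    have hq := quad_le (a := a) (K := k + 1) (by linarith) (by linarith)
    have e1 : cubeNode i - cubeNode k
        = (a - (k + 1)) * ((k + 1) ^ 2 + a * (k + 1) + a ^ 2) := by
      simp only [cubeNode, ha]; ring
    have e2 : cubeNode (i + 1) - cubeNode k
        = (a - k) * ((k + 1) ^ 2 + (a + 1) * (k + 1) + (a + 1) ^ 2) := by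
      simp only [cubeNode, ha]; push_cast; ring
    have ha0 : 0 < a := by linarith
    have p1 : 0 ≤ a - (k + 1) := by linarith
    have p2 : 0 ≤ a - k := by linarith
    rw [e1, e2, abs_of_nonneg (by positivity), abs_of_nonneg (by positivity)]
    have := mul_le_mul_of_nonneg_left hq (mul_nonneg p1 p2)
    push_cast
    calc _ = _ := by ring
      _ ≤ _ := this
      _ = _ := by ring

/-- Nodes above `i + 1`: the factors `(K - a) / (K - a - 1)` and `quad_le` both telescope. -/
lemma prod_above (i m : ℕ) {a : ℝ} (ha : a = i + 1) :
    1 / (a + 1 + (a / 2 + 1)) * ∏ k ∈ range m, |cubeNode i - cubeNode (i + 2 + k)|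
      ≤ (m + 1) / (m + a + 1 + (a / 2 + 1))
        * ∏ k ∈ range m, |cubeNode (i + 1) - cubeNode (i + 2 + k)| := by
  have key := telescoping (fun k => (k + 1) / (k + a + 1 + (a / 2 + 1)))
    (fun k => |cubeNode i - cubeNode (i + 2 + k)|)
    (fun k => |cubeNode (i + 1) - cubeNode (i + 2 + k)|) m
    (fun _ => abs_nonneg _) (fun _ => abs_nonneg _) ?_
  · simpa using key
  · intro k _
    have hk0 : (0 : ℝ) ≤ k := k.cast_nonneg
    have ha0 : 0 < a := by rw [ha]; positivity
    have hq := quad_le (a := a) (K := k + a + 2) ha0 (by linarith)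
    have e1 : cubeNode i - cubeNode (i + 2 + k)
        = -((k + 2) * ((k + a + 2) ^ 2 + a * (k + a + 2) + a ^ 2)) := by
      simp only [cubeNode, ha]; push_cast; ring
    have e2 : cubeNode (i + 1) - cubeNode (i + 2 + k)
        = -((k + 1) * ((k + a + 2) ^ 2 + (a + 1) * (k + a + 2) + (a + 1) ^ 2)) := by
      simp only [cubeNode, ha]; push_cast; ring
    rw [e1, e2, abs_neg, abs_neg, abs_of_nonneg (by positivity), abs_of_nonneg (by positivity)]
    have := mul_le_mul_of_nonneg_left hq (by positivity : (0 : ℝ) ≤ (k + 1) * (k + 2))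
    push_cast
    calc _ = _ := by ring
      _ ≤ _ := this
      _ = _ := by ring

lemma cubeNode_injective : Function.Injective cubeNode := by
  intro m n h
  have h3 : (m : ℝ) + 1 = n + 1 :=
    (pow_left_inj₀ (by positivity) (by positivity) (by norm_num : 3 ≠ 0)).1 h
  exact_mod_cast add_right_cancel h3

/-- The constant left over after telescoping, the factor `(m+1) / (m+a+1+s)` being at most `1`. -/
lemma const_le {a : ℝ} (ha : 0 < a) (m : ℕ) :
    a ^ 3 * (((a / 2 + 1) / a * (1 / (a - 1 + (a / 2 + 1))))
      * ((a + 1 + (a / 2 + 1)) * ((m + 1) / (m + a + 1 + (a / 2 + 1)))))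
      ≤ 19 / 20 * (a + 1) ^ 3 := by
  have hm : (0 : ℝ) ≤ m := m.cast_nonneg
  have h1 : ((m : ℝ) + 1) / (m + a + 1 + (a / 2 + 1)) ≤ 1 := by
    rw [div_le_one (by linarith)]; linarith
  have h2 : a - 1 + (a / 2 + 1) = 3 * a / 2 := by ring
  rw [h2]
  calc _ ≤ a ^ 3 * (((a / 2 + 1) / a * (1 / (3 * a / 2)))
      * ((a + 1 + (a / 2 + 1)) * 1)) := by gcongr
    _ = a * (a + 2) * (3 * a + 4) / 6 := by field_simp; ring
    _ ≤ _ := by nlinarith [pow_pos ha 2, pow_pos ha 3]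

/-- There is an absolute constant `i₀ ∈ ℕ` such that for every `ℓ ≥ 1`
and every index `i` with `i₀ ≤ i ≤ ℓ - 1` (`1`-based indexing), the unique solution
`z ∈ ℝ^ℓ` of the Vandermonde system `A(α) z = e₁` with nodes `α_j = j³` satisfies
`|z_{i+1}| ≤ e^{-1/20} |z_i|`.  Here the Lean index `i : Fin ℓ` corresponds to the
`1`-based mathematical index `↑i + 1`, and `j` is its successor. -/
theorem statement9 :
    ∃ i₀ : ℕ, ∀ (ℓ : ℕ), 0 < ℓ → ∀ z : Fin ℓ → ℝ,
      (vandermondeCubes ℓ).mulVec z = (fun k : Fin ℓ => if (k : ℕ) = 0 then (1 : ℝ) else 0) →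
      ∀ i j : Fin ℓ, (j : ℕ) = (i : ℕ) + 1 → i₀ ≤ (i : ℕ) + 1 →
        |z j| ≤ Real.exp (-(1 / 20)) * |z i| := by
  refine ⟨0, ?_⟩
  rintro ℓ hℓ z hz ⟨i, hi⟩ ⟨j, hj⟩ hij -
  simp only at hij
  subst hij
  obtain ⟨m, rfl⟩ : ∃ m, ℓ = i + 2 + m := ⟨ℓ - (i + 2), by omega⟩
  set q : Polynomial ℝ := (∏ k ∈ range i, (Polynomial.X - Polynomial.C (cubeNode k)))
    * ∏ k ∈ range m, (Polynomial.X - Polynomial.C (cubeNode (i + 2 + k))) with hq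
  have hqe : ∀ x, q.eval x = (∏ k ∈ range i, (x - cubeNode k))
      * ∏ k ∈ range m, (x - cubeNode (i + 2 + k)) := by
    intro x
    simp [hq, Polynomial.eval_prod]
  have hdeg : (Polynomial.X * q).natDegree < i + 2 + m := by
    have h1 := Polynomial.natDegree_mul_le (p := Polynomial.X) (q := q)
    have h2 : q.natDegree ≤ i + m := by
      refine Polynomial.natDegree_mul_le.trans (add_le_add ?_ ?_)
      · rw [Polynomial.natDegree_finsetProd_X_sub_C_eq_card, card_range]
      · rw [Polynomial.natDegree_finsetProd_X_sub_C_eq_card, card_range]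
    rw [Polynomial.natDegree_X] at h1
    omega
  have hsum := sum_mul_eval hℓ z hz _ hdeg
  -- `q` vanishes at every node except those of index `i` and `i + 1`.
  have hrel : z ⟨i, hi⟩ * (cubeNode i * q.eval (cubeNode i))
      + z ⟨i + 1, hj⟩ * (cubeNode (i + 1) * q.eval (cubeNode (i + 1))) = 0 := by
    rw [Finset.sum_eq_add (⟨i, hi⟩ : Fin (i + 2 + m)) ⟨i + 1, hj⟩ (by simp)] at hsum
    · simpa using hsum
    · rintro ⟨k, hk⟩ - ⟨hk1, hk2⟩
      have hk1 : k ≠ i := fun h => hk1 (Fin.ext h)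
      have hk2 : k ≠ i + 1 := fun h => hk2 (Fin.ext h)
      have : q.eval (cubeNode k) = 0 := by
        rw [hqe]
        rcases lt_or_ge k i with h | h
        · rw [Finset.prod_eq_zero (mem_range.2 h) (sub_self _), zero_mul]
        · obtain ⟨n, rfl⟩ : ∃ n, k = i + 2 + n := ⟨k - (i + 2), by omega⟩
          have hn : n ∈ range m := mem_range.2 (by omega)
          rw [Finset.prod_eq_zero (s := range m) hn (sub_self _), mul_zero]
      simp [this]
    · simp
    · simp
  set a : ℝ := (i : ℝ) + 1 with ha
  have ha0 : 0 < a := by positivity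
  have hb := prod_below i ha
  have hc := prod_above i m ha
  set U₁ := ∏ k ∈ range i, |cubeNode i - cubeNode k| with hU₁
  set V₁ := ∏ k ∈ range i, |cubeNode (i + 1) - cubeNode k| with hV₁
  set U₂ := ∏ k ∈ range m, |cubeNode i - cubeNode (i + 2 + k)| with hU₂
  set V₂ := ∏ k ∈ range m, |cubeNode (i + 1) - cubeNode (i + 2 + k)| with hV₂
  have hU₂0 : 0 ≤ U₂ := Finset.prod_nonneg fun _ _ => abs_nonneg _
  have hV₁0 : 0 < V₁ := Finset.prod_pos fun k hk => abs_pos.2 <| sub_ne_zero.2 fun h => by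
    have := cubeNode_injective h
    have := mem_range.1 hk
    omega
  have hV₂0 : 0 < V₂ := Finset.prod_pos fun k hk => abs_pos.2 <| sub_ne_zero.2 fun h => by
    have := cubeNode_injective h
    omega
  have habs : |z ⟨i + 1, hj⟩| * ((a + 1) ^ 3 * (V₁ * V₂)) = |z ⟨i, hi⟩| * (a ^ 3 * (U₁ * U₂)) := by
    have h := congrArg abs (eq_neg_of_add_eq_zero_right hrel)
    rw [hqe, hqe, abs_neg] at h
    simp only [abs_mul, Finset.abs_prod] at h
    have c1 : |cubeNode i| = a ^ 3 := abs_of_nonneg (pow_nonneg ha0.le 3)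
    have c2 : |cubeNode (i + 1)| = (a + 1) ^ 3 := by
      rw [abs_of_nonneg] <;> simp only [cubeNode]
      · rw [ha]; push_cast; rfl
      · positivity
    rwa [c1, c2] at h
  have hpos1 : 0 < a - 1 + (a / 2 + 1) := by linarith
  have hb' : U₁ ≤ (a / 2 + 1) / a * (1 / (a - 1 + (a / 2 + 1))) * V₁ := by
    have := mul_le_mul_of_nonneg_left hb (by positivity : 0 ≤ (a / 2 + 1) / a)
    calc U₁ = (a / 2 + 1) / a * (a / (a / 2 + 1) * U₁) := by field_simp
      _ ≤ _ := this
      _ = _ := by ring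
  have hc' : U₂ ≤ (a + 1 + (a / 2 + 1)) * ((m + 1) / (m + a + 1 + (a / 2 + 1))) * V₂ := by
    have := mul_le_mul_of_nonneg_left hc (by positivity : 0 ≤ a + 1 + (a / 2 + 1))
    calc U₂ = (a + 1 + (a / 2 + 1)) * (1 / (a + 1 + (a / 2 + 1)) * U₂) := by field_simp
      _ ≤ _ := this
      _ = _ := by ring
  have hUV : a ^ 3 * (U₁ * U₂) ≤ 19 / 20 * ((a + 1) ^ 3 * (V₁ * V₂)) := by
    have h1 := mul_le_mul hb' hc' hU₂0 (by positivity)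
    have h2 := mul_le_mul_of_nonneg_left h1 (by positivity : 0 ≤ a ^ 3)
    have h3 := mul_le_mul_of_nonneg_right (const_le ha0 m) (mul_pos hV₁0 hV₂0).le
    linarith
  have hD : 0 < (a + 1) ^ 3 * (V₁ * V₂) := by positivity
  have hz' : |z ⟨i + 1, hj⟩| ≤ 19 / 20 * |z ⟨i, hi⟩| := by
    refine le_of_mul_le_mul_right ?_ hD
    rw [habs]
    have := mul_le_mul_of_nonneg_left hUV (abs_nonneg (z ⟨i, hi⟩))
    linarith
  have hexp : (19 / 20 : ℝ) ≤ Real.exp (-(1 / 20)) := by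
    have := Real.add_one_le_exp (-(1 / 20) : ℝ)
    linarith
  exact hz'.trans (mul_le_mul_of_nonneg_right hexp (abs_nonneg _))
end

section
/- Let p be a distribution on {−1,1}^n, let q ∈ ℕ₊ and r ≥ 0, and let Z^(r) be the statistic built from 2q independent samples of p. Then E[Z^(r)] = ‖μ(⊙^r(p))‖₂², and Var[Z^(r)] ≤ (1/q²)·‖μ(⊙^{r+1}(p))‖₂² + (4/q)·‖μ(⊙^r(p))‖₂² · ‖μ(⊙^{r+1}(p))‖₂. -/
/-!
Write `T x = (∏ₜ x_{I t})_I` for the `2^r`-fold tensor power of `x`, `μ = E[T x]` and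
`M = E[T x (T x)ᵀ]`. Since `⟨x, y⟩^(2^r) = ⟨T x, T y⟩`, the statistic is `Z = ⟨a, b⟩`, where `a` and `b`
are the averages of `T` over the two independent halves of the sample. Hence `E[Z] = ‖μ‖²`.

Independence of the halves gives `E[Z²] = ∑_{I,J} S_{IJ}²`, where
`S = E[a aᵀ] = (1/q) M + (1 - 1/q) μ μᵀ` (`wsum_sum_mul_sum`). Expanding the square,
`E[Z²] = ‖M‖_F²/q² + (2/q)(1 - 1/q) ⟨μ, M μ⟩ + (1 - 1/q)² ‖μ‖⁴`.
Here `‖M‖_F² = E⟨x, y⟩^(2^(r+1))` is the squared norm of the tensor mean of order `r + 1`, and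
`⟨μ, M μ⟩ ≤ ‖M‖_F ‖μ‖²` by Cauchy–Schwarz. The bound follows, even with `2/q` in place of `4/q`.
-/

open Finset

namespace JuntaPaper

/-- `‖μ(⊙^r(p))‖₂²`: the squared Euclidean norm of the `r`-th order tensor mean of `p`,
whose entry at `(i_1,…,i_R) ∈ [n]^R` (with `R = 2^r`) is `E_{x∼p}[x_{i_1}⋯x_{i_R}]`. -/
noncomputable def tensorNormSq {n : ℕ} (p : Cube n → ℝ) (r : ℕ) : ℝ :=
  ∑ I : Fin (2 ^ r) → Fin n, (∑ x, p x * ∏ t, bval (x (I t))) ^ 2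

/-- The standard inner product of two cube points viewed in `{-1,1}^n ⊆ ℝ^n`. -/
noncomputable def innerB {n : ℕ} (x y : Cube n) : ℝ := ∑ i, bval (x i) * bval (y i)

/-- The test statistic `Z^(r) = (1/q²) Σ_i Σ_j ⟨X_i, Y_j⟩^{2^r}`. -/
noncomputable def Zstat {n : ℕ} (q : ℕ) (r : ℕ) (X Y : Fin q → Cube n) : ℝ :=
  (1 / (q : ℝ) ^ 2) * ∑ i, ∑ j, innerB (X i) (Y j) ^ (2 ^ r)

/-- Expectation of `F(X₁,…,X_q, Y₁,…,Y_q)` over `2q` independent samples from `p`. -/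
noncomputable def Esamp {n : ℕ} (p : Cube n → ℝ) (q : ℕ)
    (F : (Fin q → Cube n) → (Fin q → Cube n) → ℝ) : ℝ :=
  ∑ X : Fin q → Cube n, ∑ Y : Fin q → Cube n,
    (∏ i, p (X i)) * (∏ j, p (Y j)) * F X Y

open Classical in
/-- Probability of an event of the `2q` independent samples from `p`. -/
noncomputable def Prsamp {n : ℕ} (p : Cube n → ℝ) (q : ℕ)
    (E : (Fin q → Cube n) → (Fin q → Cube n) → Prop) : ℝ :=
  ∑ X : Fin q → Cube n, ∑ Y : Fin q → Cube n,
    (∏ i, p (X i)) * (∏ j, p (Y j)) * (if E X Y then 1 else 0)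

/-- `p` is a `k`-junta distribution. -/
def IsJuntaDist {n : ℕ} (k : ℕ) (p : Cube n → ℝ) : Prop :=
  ∃ J : Finset (Fin n), J.card ≤ k ∧ JuntaOn J p

/-- The thresholds `τ_0 = ε²n/2`, `τ_r = q²τ_{r-1}²/5000`. -/
noncomputable def tauSeq (q : ℕ) (ε : ℝ) (n : ℕ) : ℕ → ℝ
  | 0 => ε ^ 2 * n / 2
  | r + 1 => (q : ℝ) ^ 2 * tauSeq q ε n r ^ 2 / 5000

/-- The expectation of `F (X₁, …, X_q)` over `q` independent samples from `p`. -/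
noncomputable def wsum {α : Type*} [Fintype α] (p : α → ℝ) (q : ℕ) (F : (Fin q → α) → ℝ) : ℝ :=
  ∑ X : Fin q → α, (∏ i, p (X i)) * F X

section Samples

variable {α : Type*} [Fintype α] (p : α → ℝ) (q : ℕ)

lemma wsum_sum {ι : Type*} (s : Finset ι) (F : ι → (Fin q → α) → ℝ) :
    wsum p q (fun X => ∑ i ∈ s, F i X) = ∑ i ∈ s, wsum p q (F i) := by
  simp only [wsum, Finset.mul_sum]
  exact Finset.sum_comm

lemma wsum_const_mul (c : ℝ) (F : (Fin q → α) → ℝ) :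
    wsum p q (fun X => c * F X) = c * wsum p q F := by
  simp only [wsum, Finset.mul_sum]
  exact Finset.sum_congr rfl fun X _ => by ring

/-- The expectation of a product of functions of the separate samples factors. -/
lemma wsum_prod (u : Fin q → α → ℝ) :
    wsum p q (fun X => ∏ i, u i (X i)) = ∏ i, ∑ x, p x * u i x := by
  classical
  simp only [wsum, Finset.prod_univ_sum, Fintype.piFinset_univ, Finset.prod_mul_distrib]

variable {p}

lemma wsum_apply (hp : ∑ x, p x = 1) (f : α → ℝ) (i : Fin q) :
    wsum p q (fun X => f (X i)) = ∑ x, p x * f x := by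
  have h := wsum_prod p q (fun j x => if j = i then f x else 1)
  simp only [Finset.prod_ite_eq', Finset.mem_univ, if_true] at h
  rw [h]
  have : ∀ j, (∑ x, p x * (if j = i then f x else 1)) =
      if j = i then ∑ x, p x * f x else 1 := by
    intro j
    split_ifs <;> simp [hp]
  rw [Finset.prod_congr rfl fun j _ => this j]
  simp

lemma wsum_apply_mul_apply (hp : ∑ x, p x = 1) (f g : α → ℝ) {i k : Fin q} (hik : i ≠ k) :
    wsum p q (fun X => f (X i) * g (X k)) = (∑ x, p x * f x) * ∑ x, p x * g x := by
  have h := wsum_prod p q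
    (fun j x => (if j = i then f x else 1) * (if j = k then g x else 1))
  simp only [Finset.prod_mul_distrib, Finset.prod_ite_eq', Finset.mem_univ, if_true] at h
  rw [h]
  have : ∀ j, (∑ x, p x * ((if j = i then f x else 1) * (if j = k then g x else 1))) =
      (if j = i then ∑ x, p x * f x else 1) * (if j = k then ∑ x, p x * g x else 1) := by
    intro j
    by_cases h1 : j = i
    · have h2 : j ≠ k := fun h => hik (h1.symm.trans h)
      simp [h1, hik]
    · by_cases h2 : j = k <;> simp [h1, h2, hik.symm, hp]
  rw [Finset.prod_congr rfl fun j _ => this j, Finset.prod_mul_distrib]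
  simp

lemma wsum_sum_apply (hp : ∑ x, p x = 1) (f : α → ℝ) :
    wsum p q (fun X => ∑ i, f (X i)) = q * ∑ x, p x * f x := by
  rw [wsum_sum]
  simp [wsum_apply q hp]

/-- The second mixed moment of two empirical sums: the `q` diagonal pairs of samples contribute
`E[f g]` each, and the remaining `q² - q` pairs contribute `E[f] E[g]`. -/
lemma wsum_sum_mul_sum (hp : ∑ x, p x = 1) (f g : α → ℝ) :
    wsum p q (fun X => (∑ i, f (X i)) * ∑ k, g (X k)) =
      q * (∑ x, p x * (f x * g x)) +
        ((q : ℝ) ^ 2 - q) * ((∑ x, p x * f x) * ∑ x, p x * g x) := by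
  have h : ∀ i k : Fin q, wsum p q (fun X => f (X i) * g (X k)) =
      (∑ x, p x * f x) * (∑ x, p x * g x) + (if k = i then
        (∑ x, p x * (f x * g x)) - (∑ x, p x * f x) * ∑ x, p x * g x else 0) := by
    intro i k
    split_ifs with hik
    · subst hik
      rw [wsum_apply q hp (fun x => f x * g x) k]
      ring
    · rw [wsum_apply_mul_apply q hp f g (Ne.symm hik), add_zero]
  simp only [Finset.sum_mul_sum, wsum_sum, h, Finset.sum_add_distrib, Finset.sum_ite_eq',
    Finset.mem_univ, if_true, Finset.sum_const, Finset.card_univ, Fintype.card_fin, nsmul_eq_mul]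
  ring

end Samples

lemma sum_rotate {α β ι : Type*} (a : Finset α) (b : Finset β) (s : Finset ι)
    (f : α → β → ι → ℝ) :
    ∑ x ∈ a, ∑ y ∈ b, ∑ i ∈ s, f x y i = ∑ i ∈ s, ∑ x ∈ a, ∑ y ∈ b, f x y i := by
  rw [Finset.sum_comm (s := s)]
  exact Finset.sum_congr rfl fun x _ => Finset.sum_comm

section Esamp

variable {n : ℕ} (p : Cube n → ℝ) (q : ℕ)

lemma Esamp_sum {ι : Type*} (s : Finset ι) (F : ι → (Fin q → Cube n) → (Fin q → Cube n) → ℝ) :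
    Esamp p q (fun X Y => ∑ i ∈ s, F i X Y) = ∑ i ∈ s, Esamp p q (F i) := by
  simp only [Esamp, Finset.mul_sum]
  exact sum_rotate _ _ _ _

lemma Esamp_mul (F G : (Fin q → Cube n) → ℝ) :
    Esamp p q (fun X Y => F X * G Y) = wsum p q F * wsum p q G := by
  simp only [Esamp, wsum, Finset.sum_mul_sum]
  exact Finset.sum_congr rfl fun X _ => Finset.sum_congr rfl fun Y _ => by ring

lemma Esamp_const_mul (c : ℝ) (F : (Fin q → Cube n) → (Fin q → Cube n) → ℝ) :
    Esamp p q (fun X Y => c * F X Y) = c * Esamp p q F := by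
  simp only [Esamp, Finset.mul_sum]
  exact Finset.sum_congr rfl fun X _ => Finset.sum_congr rfl fun Y _ => by ring

variable {p}

lemma Esamp_variance (hp : ∑ x, p x = 1) (F : (Fin q → Cube n) → (Fin q → Cube n) → ℝ) :
    Esamp p q (fun X Y => (F X Y - Esamp p q F) ^ 2) =
      Esamp p q (fun X Y => F X Y ^ 2) - Esamp p q F ^ 2 := by
  have hone : Esamp p q (fun _ _ => 1) = 1 := by
    have h := Esamp_mul p q (fun _ => 1) (fun _ => 1)
    have h1 : wsum p q (fun _ => 1) = 1 := by
      have := wsum_prod p q (fun _ _ => 1)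
      simpa [hp] using this
    simpa [h1] using h
  have key : ∀ c : ℝ, Esamp p q (fun X Y => (F X Y - c) ^ 2) =
      Esamp p q (fun X Y => F X Y ^ 2) - 2 * c * Esamp p q F
        + c ^ 2 * Esamp p q (fun _ _ => 1) := by
    intro c
    simp only [Esamp, Finset.mul_sum, ← Finset.sum_sub_distrib, ← Finset.sum_add_distrib]
    exact Finset.sum_congr rfl fun X _ => Finset.sum_congr rfl fun Y _ => by ring
  rw [key, hone]
  ring

end Esamp

section Tensor

variable {n : ℕ}

/-- The entry of the `m`-fold tensor power of the cube point `x` at the multi-index `I`. -/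
noncomputable def tens {m : ℕ} (I : Fin m → Fin n) (x : Cube n) : ℝ := ∏ t, bval (x (I t))

lemma innerB_pow (m : ℕ) (x y : Cube n) :
    innerB x y ^ m = ∑ I : Fin m → Fin n, tens I x * tens I y := by
  simp only [innerB, tens, Fintype.sum_pow, Finset.prod_mul_distrib]

/-- A sum of squared means `(E[f_I])²` is the expectation over independent pairs of samples of
`∑_I f_I(x) f_I(y)`. -/
lemma sum_mean_sq {α ι : Type*} [Fintype α] [Fintype ι] (p : α → ℝ) (f : ι → α → ℝ) :
    ∑ I, (∑ x, p x * f I x) ^ 2 = ∑ x, ∑ y, p x * p y * ∑ I, f I x * f I y := by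
  simp_rw [sq, Finset.sum_mul_sum, Finset.mul_sum]
  symm
  rw [sum_rotate]
  exact Finset.sum_congr rfl fun I _ => Finset.sum_congr rfl fun x _ =>
    Finset.sum_congr rfl fun y _ => by ring

lemma tensorNormSq_eq (p : Cube n → ℝ) (r : ℕ) :
    tensorNormSq p r = ∑ I : Fin (2 ^ r) → Fin n, (∑ x, p x * tens I x) ^ 2 := rfl

/-- The tensor mean of order `r + 1` has the same norm as the second-moment matrix of the
`2^r`-fold tensor power. -/
lemma tensorNormSq_succ (p : Cube n → ℝ) (r : ℕ) :
    tensorNormSq p (r + 1) = ∑ I : Fin (2 ^ r) → Fin n, ∑ J : Fin (2 ^ r) → Fin n,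
      (∑ x, p x * (tens I x * tens J x)) ^ 2 := by
  have h := sum_mean_sq p
    (fun (K : (Fin (2 ^ r) → Fin n) × (Fin (2 ^ r) → Fin n)) x => tens K.1 x * tens K.2 x)
  rw [Fintype.sum_prod_type] at h
  rw [h, tensorNormSq_eq, sum_mean_sq]
  refine Finset.sum_congr rfl fun x _ => Finset.sum_congr rfl fun y _ => ?_
  rw [← innerB_pow, pow_succ, pow_mul, sq, innerB_pow, Finset.sum_mul_sum, Fintype.sum_prod_type]
  congr 1
  exact Finset.sum_congr rfl fun I _ => Finset.sum_congr rfl fun J _ => by ring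

lemma Zstat_eq (q r : ℕ) (X Y : Fin q → Cube n) :
    Zstat q r X Y = (1 / (q : ℝ) ^ 2) *
      ∑ I : Fin (2 ^ r) → Fin n, (∑ i, tens I (X i)) * ∑ j, tens I (Y j) := by
  simp only [Zstat, innerB_pow, Finset.sum_mul_sum]
  congr 1
  exact sum_rotate _ _ _ _

end Tensor

/-- The quadratic form `⟨μ, M μ⟩` is at most the Frobenius norm of `M` times `‖μ‖²`. -/
lemma quadForm_le {ι : Type*} [Fintype ι] (μ : ι → ℝ) (M : ι → ι → ℝ) :
    ∑ I, ∑ J, M I J * (μ I * μ J) ≤ (∑ I, μ I ^ 2) * Real.sqrt (∑ I, ∑ J, M I J ^ 2) := by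
  have h := Finset.sum_mul_sq_le_sq_mul_sq (Finset.univ : Finset (ι × ι))
    (fun K => M K.1 K.2) (fun K => μ K.1 * μ K.2)
  simp only [Fintype.sum_prod_type, mul_pow, ← Finset.sum_mul_sum] at h
  have hA : 0 ≤ ∑ I, μ I ^ 2 := Finset.sum_nonneg fun I _ => sq_nonneg _
  have hB : 0 ≤ ∑ I, ∑ J, M I J ^ 2 :=
    Finset.sum_nonneg fun I _ => Finset.sum_nonneg fun J _ => sq_nonneg _
  refine abs_le_of_sq_le_sq' ?_ (by positivity) |>.2
  simp only [mul_pow, Real.sq_sqrt hB]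
  linarith

/-- For any distribution `p` on `{-1,1}^n`, `q ≥ 1` and `r ≥ 0`, the
statistic `Z^(r)` built from `2q` independent samples of `p` satisfies
`E[Z^(r)] = ‖μ(⊙^r(p))‖₂²` and
`Var[Z^(r)] ≤ (1/q²)‖μ(⊙^{r+1}(p))‖₂² + (4/q)‖μ(⊙^r(p))‖₂²·‖μ(⊙^{r+1}(p))‖₂`. -/
theorem statement10 (n : ℕ) (p : Cube n → ℝ) (hp : IsDist p) (q : ℕ) (hq : 0 < q)
    (r : ℕ) :
    Esamp p q (Zstat q r) = tensorNormSq p r ∧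
    Esamp p q (fun X Y => (Zstat q r X Y - Esamp p q (Zstat q r)) ^ 2) ≤
      (1 / (q : ℝ) ^ 2) * tensorNormSq p (r + 1) +
        (4 / (q : ℝ)) * tensorNormSq p r * Real.sqrt (tensorNormSq p (r + 1)) := by
  have hp1 := hp.2
  have hq0 : (q : ℝ) ≠ 0 := by exact_mod_cast hq.ne'
  have hmean : Esamp p q (Zstat q r) = tensorNormSq p r := by
    have h : Zstat q r = fun X Y : Fin q → Cube n => (1 / (q : ℝ) ^ 2) *
        ∑ I : Fin (2 ^ r) → Fin n, (∑ i, tens I (X i)) * ∑ j, tens I (Y j) := by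
      funext X Y
      exact Zstat_eq q r X Y
    rw [h, Esamp_const_mul, Esamp_sum, tensorNormSq_eq, Finset.mul_sum]
    refine Finset.sum_congr rfl fun I _ => ?_
    rw [Esamp_mul p q (fun X => ∑ i, tens I (X i)) (fun Y => ∑ i, tens I (Y i)),
      wsum_sum_apply q hp1]
    field_simp
  refine ⟨hmean, ?_⟩
  rw [Esamp_variance q hp1, hmean]
  set μ : (Fin (2 ^ r) → Fin n) → ℝ := fun I => ∑ x, p x * tens I x with hμ
  set M : (Fin (2 ^ r) → Fin n) → (Fin (2 ^ r) → Fin n) → ℝ :=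
    fun I J => ∑ x, p x * (tens I x * tens J x) with hM
  have hA : tensorNormSq p r = ∑ I, μ I ^ 2 := tensorNormSq_eq p r
  have hB : tensorNormSq p (r + 1) = ∑ I, ∑ J, M I J ^ 2 := tensorNormSq_succ p r
  have hsecond : Esamp p q (fun X Y => Zstat q r X Y ^ 2) = (1 / (q : ℝ) ^ 4) *
      ∑ I, ∑ J, (q * M I J + ((q : ℝ) ^ 2 - q) * (μ I * μ J)) ^ 2 := by
    have h : (fun X Y : Fin q → Cube n => Zstat q r X Y ^ 2) = fun X Y => (1 / (q : ℝ) ^ 4) *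
        ∑ I : Fin (2 ^ r) → Fin n, ∑ J : Fin (2 ^ r) → Fin n,
          ((∑ i, tens I (X i)) * ∑ k, tens J (X k)) *
            ((∑ i, tens I (Y i)) * ∑ k, tens J (Y k)) := by
      funext X Y
      rw [Zstat_eq, mul_pow, sq (∑ I : Fin (2 ^ r) → Fin n, _), Finset.sum_mul_sum]
      congr 1
      · ring
      · exact Finset.sum_congr rfl fun I _ => Finset.sum_congr rfl fun J _ => by ring
    rw [h, Esamp_const_mul, Esamp_sum]
    congr 1
    refine Finset.sum_congr rfl fun I _ => ?_
    rw [Esamp_sum]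
    refine Finset.sum_congr rfl fun J _ => ?_
    rw [Esamp_mul p q (fun X => (∑ i, tens I (X i)) * ∑ k, tens J (X k))
      (fun Y => (∑ i, tens I (Y i)) * ∑ k, tens J (Y k)), wsum_sum_mul_sum q hp1, ← sq]
  have hexpand : ∑ I, ∑ J, (q * M I J + ((q : ℝ) ^ 2 - q) * (μ I * μ J)) ^ 2 =
      (q : ℝ) ^ 2 * (∑ I, ∑ J, M I J ^ 2) +
        2 * q * ((q : ℝ) ^ 2 - q) * (∑ I, ∑ J, M I J * (μ I * μ J)) +
        ((q : ℝ) ^ 2 - q) ^ 2 * (∑ I, μ I ^ 2) ^ 2 := by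
    rw [sq (∑ I, μ I ^ 2), Finset.sum_mul_sum]
    simp only [Finset.mul_sum, ← Finset.sum_add_distrib]
    exact Finset.sum_congr rfl fun I _ => Finset.sum_congr rfl fun J _ => by ring
  have hC := quadForm_le μ M
  rw [hsecond, hexpand, ← hA, ← hB]
  rw [← hA, ← hB] at hC
  have hA0 : 0 ≤ tensorNormSq p r := hA ▸ Finset.sum_nonneg fun I _ => sq_nonneg _
  have hD0 : 0 ≤ tensorNormSq p r * Real.sqrt (tensorNormSq p (r + 1)) := by positivity
  generalize (∑ I, ∑ J, M I J * (μ I * μ J)) = C at hC ⊢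
  rw [mul_assoc (4 / (q : ℝ))]
  generalize tensorNormSq p r * Real.sqrt (tensorNormSq p (r + 1)) = D at hC hD0 ⊢
  generalize tensorNormSq p (r + 1) = B
  generalize tensorNormSq p r = A
  -- In terms of `t = 1 / q ∈ [0, 1]` the goal is polynomial.
  obtain ⟨t, ht⟩ : ∃ t, t = 1 / (q : ℝ) := ⟨_, rfl⟩
  have hq1 : (1 : ℝ) ≤ q := by exact_mod_cast hq
  have ht0 : 0 ≤ t := by rw [ht]; positivity
  have ht1 : t ≤ 1 := by rw [ht]; exact (div_le_one (by linarith)).2 hq1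
  have hl : 1 / (q : ℝ) ^ 4 * ((q : ℝ) ^ 2 * B + 2 * q * ((q : ℝ) ^ 2 - q) * C +
      ((q : ℝ) ^ 2 - q) ^ 2 * A ^ 2) - A ^ 2 =
      t ^ 2 * B + 2 * (t * (1 - t)) * C - t * (2 - t) * A ^ 2 := by
    rw [ht]
    field_simp
    ring
  have hr : 1 / (q : ℝ) ^ 2 * B + 4 / (q : ℝ) * D = t ^ 2 * B + 4 * t * D := by
    rw [ht]
    field_simp
  rw [hl, hr]
  have h1 : t * (1 - t) * C ≤ t * (1 - t) * D :=
    mul_le_mul_of_nonneg_left hC (mul_nonneg ht0 (by linarith))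
  have h2 : 0 ≤ t * (2 - t) * A ^ 2 :=
    mul_nonneg (mul_nonneg ht0 (by linarith)) (sq_nonneg _)
  have h3 : 0 ≤ t * D := mul_nonneg ht0 hD0
  have h4 : 0 ≤ t * t * D := mul_nonneg (mul_nonneg ht0 ht0) hD0
  nlinarith

end JuntaPaper
end
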